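/- Let R : P₂ → ℝ be a bounded Lebesgue measurable function such that R(x,y) − R(x,z) + R(y,z) − R(x/z, y/z) − R((z−1)/(x−1), (z−1)/(y−1)) + R(x(z−1)/(z(x−1)), y(z−1)/(z(y−1))) = 0 for ALL (x,y,z) ∈ P₃ and R(1−y, (1−y)/(1−x)) = R(x,y) for ALL (x,y) ∈ P₂, and let C ∈ ℝ. Then there exists a bounded Lebesgue measurable function L : (0,1) → ℝ such that L(x) − L(y) − L(x/y) − L((y−1)/(x−1)) + L(x(y−1)/(y(x−1))) = R(x,y) for ALL (x,y) ∈ P₂ and L(1−x) = C − L(x) for ALL x ∈ (0,1). -/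

import Mathlib

open MeasureTheory Set

/-- The parameter space `P₂ = {(x,y) : 0 < x < y < 1}`. -/
def P2 : Set (ℝ × ℝ) := {p | 0 < p.1 ∧ p.1 < p.2 ∧ p.2 < 1}

/-- linear coboundary -/
noncomputable def dl (L : ℝ → ℝ) (x y : ℝ) : ℝ :=
  L ((y - x) / (1 - x)) - L y + L x - L (x / y) + L (x * (1 - y) / (y * (1 - x)))

/-- linear six term relation -/
def H6 (R : ℝ × ℝ → ℝ) : Prop := ∀ x y z : ℝ, 0 < x → x < y → y < z → z < 1 →
  R (x, y) - R (x, z) + R (y, z) - R (x / z, y / z) - R ((y - x) / (1 - x), (z - x) / (1 - x))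
    + R (x * (1 - z) / (z * (1 - x)), y * (1 - z) / (z * (1 - y))) = 0

theorem H6_dl (L : ℝ → ℝ) : H6 (fun p => dl L p.1 p.2) := by
  intro x y z hx hxy hyz hz
  have h1 : 0 < y := by linarith
  have h2 : 0 < z := by linarith
  have h3 : 0 < 1 - x := by linarith
  have h4 : 0 < 1 - y := by linarith
  have h5 : 0 < 1 - z := by linarith
  have h6 : 0 < y - x := by linarith
  have h7 : 0 < z - x := by linarith
  have h8 : 0 < z - y := by linarith
  simp only [dl]
  have e1 : (y / z - x / z) / (1 - x / z) = (y - x) / (z - x) := by field_simp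
  have e2 : x / z / (y / z) = x / y := by field_simp
  have e3 : x / z * (1 - y / z) / (y / z * (1 - x / z)) = x * (z - y) / (y * (z - x)) := by
    field_simp
  have f0 : 1 - (y - x) / (1 - x) = (1 - y) / (1 - x) := by field_simp; ring
  have f0' : 1 - (z - x) / (1 - x) = (1 - z) / (1 - x) := by field_simp; ring
  have e4 : ((z - x) / (1 - x) - (y - x) / (1 - x)) / (1 - (y - x) / (1 - x)) = (z - y) / (1 - y) := by
    rw [f0]; field_simp; ring
  have e5 : (y - x) / (1 - x) / ((z - x) / (1 - x)) = (y - x) / (z - x) := by field_simp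
  have e6 : (y - x) / (1 - x) * (1 - (z - x) / (1 - x)) / ((z - x) / (1 - x) * (1 - (y - x) / (1 - x)))
      = (y - x) * (1 - z) / ((z - x) * (1 - y)) := by
    rw [f0, f0']; field_simp
  have g1 : 1 - x * (1 - z) / (z * (1 - x)) = (z - x) / (z * (1 - x)) := by field_simp; ring
  have g2 : 1 - y * (1 - z) / (z * (1 - y)) = (z - y) / (z * (1 - y)) := by field_simp; ring
  have g3 : y * (1 - z) / (z * (1 - y)) - x * (1 - z) / (z * (1 - x))
      = (1 - z) * (y - x) / (z * (1 - y) * (1 - x)) := by field_simp; ring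
  have e7 : (y * (1 - z) / (z * (1 - y)) - x * (1 - z) / (z * (1 - x))) /
      (1 - x * (1 - z) / (z * (1 - x))) = (y - x) * (1 - z) / ((z - x) * (1 - y)) := by
    rw [g1, g3]; field_simp
  have e8 : x * (1 - z) / (z * (1 - x)) / (y * (1 - z) / (z * (1 - y)))
      = x * (1 - y) / (y * (1 - x)) := by field_simp
  have e9 : x * (1 - z) / (z * (1 - x)) * (1 - y * (1 - z) / (z * (1 - y))) /
      (y * (1 - z) / (z * (1 - y)) * (1 - x * (1 - z) / (z * (1 - x))))
      = x * (z - y) / (y * (z - x)) := by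
    rw [g1, g2]; field_simp
  rw [e1, e2, e3, e4, e5, e6, e7, e8, e9]
  ring

theorem isOpen_P2 : IsOpen P2 := by
  have h1 : IsOpen {p : ℝ × ℝ | 0 < p.1} := isOpen_lt continuous_const continuous_fst
  have h2 : IsOpen {p : ℝ × ℝ | p.1 < p.2} := isOpen_lt continuous_fst continuous_snd
  have h3 : IsOpen {p : ℝ × ℝ | p.2 < 1} := isOpen_lt continuous_snd continuous_const
  exact h1.inter (h2.inter h3)

theorem H6_sub {R S : ℝ × ℝ → ℝ} (hR : H6 R) (hS : H6 S) : H6 (fun p => R p - S p) := by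
  intro x y z hx hxy hyz hz
  have a := hR x y z hx hxy hyz hz
  have b := hS x y z hx hxy hyz hz
  simp only
  linarith

/-- logistic -/
noncomputable def sg (t : ℝ) : ℝ := Real.exp t / (1 + Real.exp t)

theorem sg_pos (t : ℝ) : 0 < sg t := by unfold sg; positivity
theorem sg_lt_one (t : ℝ) : sg t < 1 := by
  unfold sg; rw [div_lt_one (by positivity)]; linarith [Real.exp_pos t]
theorem sg_lt {s t : ℝ} (h : s < t) : sg s < sg t := by
  unfold sg
  rw [div_lt_div_iff₀ (by positivity) (by positivity)]
  have := Real.exp_lt_exp.2 h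
  nlinarith
theorem sg_deriv (t : ℝ) : HasDerivAt sg (sg t * (1 - sg t)) t := by
  have h := (Real.hasDerivAt_exp t).div ((Real.hasDerivAt_exp t).const_add 1)
    (by positivity : (1 + Real.exp t) ≠ 0)
  exact h.congr_deriv (by unfold sg; field_simp)
theorem sg_surj {x : ℝ} (h0 : 0 < x) (h1 : x < 1) : sg (Real.log (x / (1 - x))) = x := by
  have : 0 < 1 - x := by linarith
  unfold sg
  rw [Real.exp_log (by positivity)]
  field_simp; ring

/-- If `V Θ = 0` then `Θ` depends only on the odds ratio. -/
theorem flow_const (Θ : ℝ × ℝ → ℝ)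
    (hd : ∀ x y, 0 < x → x < y → y < 1 → ∀ X Y : ℝ → ℝ, ∀ t : ℝ, X t = x → Y t = y →
      HasDerivAt X (x * (1 - x)) t → HasDerivAt Y (y * (1 - y)) t →
      HasDerivAt (fun τ => Θ (X τ, Y τ)) 0 t)
    (x y : ℝ) (hx : 0 < x) (hxy : x < y) (hy : y < 1) :
    Θ (x, y) = Θ ((x * (1 - y) / (y * (1 - x))) / (1 + (x * (1 - y) / (y * (1 - x)))), 1 / 2) := by
  have h1x : 0 < 1 - x := by linarith
  have h1y : 0 < 1 - y := by linarith
  have hy0 : 0 < y := by linarith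
  set s := Real.log (x / (1 - x)) with hs
  set t := Real.log (y / (1 - y)) with ht
  have hst : s < t := by
    apply Real.log_lt_log (by positivity)
    rw [div_lt_div_iff₀ h1x h1y]; nlinarith
  have key : ∀ τ : ℝ, HasDerivAt (fun τ => Θ (sg (s + τ), sg (t + τ))) 0 τ := by
    intro τ
    refine hd (sg (s + τ)) (sg (t + τ)) (sg_pos _) (sg_lt (by linarith)) (sg_lt_one _) 
      (fun τ => sg (s + τ)) (fun τ => sg (t + τ)) τ rfl rfl ?_ ?_
    · exact HasDerivAt.comp_const_add s τ (sg_deriv _)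
    · exact HasDerivAt.comp_const_add t τ (sg_deriv _)
  have hc := is_const_of_deriv_eq_zero (f := fun τ => Θ (sg (s + τ), sg (t + τ)))
    (fun τ => (key τ).differentiableAt) (fun τ => (key τ).deriv) 0 (-t)
  simp only [add_zero, add_neg_cancel] at hc
  rw [hs, ht, sg_surj hx (by linarith), sg_surj hy0 hy] at hc
  rw [hc]
  congr 2
  · rw [← sub_eq_add_neg, ← Real.log_div (by positivity) (by positivity)]
    unfold sg
    rw [Real.exp_log (by positivity)]
    have : x / (1 - x) / (y / (1 - y)) = x * (1 - y) / (y * (1 - x)) := by field_simp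
    rw [this]
  · unfold sg; norm_num

/-- derivative along the flow -/
noncomputable def Sd (R : ℝ × ℝ → ℝ) (p : ℝ × ℝ) : ℝ :=
  fderiv ℝ R p (p.1 * (1 - p.1), p.2 * (1 - p.2))

theorem Sd_curve {R : ℝ × ℝ → ℝ} (hR : ∀ p ∈ P2, DifferentiableAt ℝ R p) {x y κ t : ℝ} {X Y : ℝ → ℝ}
    (hx : 0 < x) (hxy : x < y) (hy : y < 1) (eX : X t = x) (eY : Y t = y)
    (dX : HasDerivAt X (κ * (x * (1 - x))) t) (dY : HasDerivAt Y (κ * (y * (1 - y))) t) :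
    HasDerivAt (fun τ => R (X τ, Y τ)) (κ * Sd R (x, y)) t := by
  have h := (hR (x, y) ⟨hx, hxy, hy⟩).hasFDerivAt
  rw [← eX, ← eY] at h
  have h2 := h.comp_hasDerivAt t (dX.prodMk dY)
  refine h2.congr_deriv ?_
  rw [eX, eY, Sd]
  have : ((κ * (x * (1 - x)), κ * (y * (1 - y))) : ℝ × ℝ) = κ • (x * (1 - x), y * (1 - y)) := by
    simp
  rw [this, map_smul, smul_eq_mul]

theorem hd_div {X Z : ℝ → ℝ} {x z t : ℝ} (hz : 0 < z) (eX : X t = x) (eZ : Z t = z)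
    (dX : HasDerivAt X (x * (1 - x)) t) (dZ : HasDerivAt Z (z * (1 - z)) t) :
    HasDerivAt (fun τ => X τ / Z τ) (z * (x / z * (1 - x / z))) t := by
  refine (dX.fun_div dZ (by rw [eZ]; exact hz.ne')).congr_deriv ?_
  rw [eX, eZ]; field_simp; ring

theorem hd_sub {X Z : ℝ → ℝ} {x z t : ℝ} (hx : x < 1) (eX : X t = x) (eZ : Z t = z)
    (dX : HasDerivAt X (x * (1 - x)) t) (dZ : HasDerivAt Z (z * (1 - z)) t) :
    HasDerivAt (fun τ => (Z τ - X τ) / (1 - X τ))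
      ((1 - x) * ((z - x) / (1 - x) * (1 - (z - x) / (1 - x)))) t := by
  have h : 1 - x ≠ 0 := by linarith
  refine ((dZ.fun_sub dX).fun_div (dX.const_sub 1) (by rw [eX]; exact h)).congr_deriv ?_
  rw [eX, eZ]; field_simp; ring

theorem hd_v {X Z : ℝ → ℝ} {x z t : ℝ} (hx : x < 1) (hz : 0 < z) (eX : X t = x) (eZ : Z t = z)
    (dX : HasDerivAt X (x * (1 - x)) t) (dZ : HasDerivAt Z (z * (1 - z)) t) :
    HasDerivAt (fun τ => (X τ * (1 - Z τ)) / (Z τ * (1 - X τ))) 0 t := by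
  have h : 1 - x ≠ 0 := by linarith
  refine ((dX.fun_mul (dZ.const_sub 1)).fun_div (dZ.fun_mul (dX.const_sub 1)) 
    (by rw [eX, eZ]; exact mul_ne_zero hz.ne' h)).congr_deriv ?_
  rw [eX, eZ]; field_simp; ring

theorem Sd_five {R : ℝ × ℝ → ℝ} (hR : ∀ p ∈ P2, DifferentiableAt ℝ R p) (h6 : H6 R)
    {x y z : ℝ} (hx : 0 < x) (hxy : x < y) (hyz : y < z) (hz : z < 1) :
    Sd R (x, y) - Sd R (x, z) + Sd R (y, z) - z * Sd R (x / z, y / z)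
      - (1 - x) * Sd R ((y - x) / (1 - x), (z - x) / (1 - x)) = 0 := by
  have hy0 : 0 < y := by linarith
  have hz0 : 0 < z := by linarith
  have cu : ∀ u, 0 < u → u < 1 → ∃ X : ℝ → ℝ, X 0 = u ∧ HasDerivAt X (u * (1 - u)) 0 ∧
     X = fun τ => sg (Real.log (u / (1 - u)) + τ) := by
    intro u h0 h1
    refine ⟨fun τ => sg (Real.log (u / (1 - u)) + τ), by simp [sg_surj h0 h1], ?_, rfl⟩
    have := HasDerivAt.comp_const_add (Real.log (u / (1 - u))) 0 (sg_deriv _)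
    simpa [sg_surj h0 h1] using this
  have lo : ∀ u v : ℝ, 0 < u → u < v → v < 1 → Real.log (u / (1 - u)) < Real.log (v / (1 - v)) := by
    intro u v h0 h1 h2
    have a : 0 < 1 - u := by linarith
    have b : 0 < 1 - v := by linarith
    apply Real.log_lt_log (by positivity)
    rw [div_lt_div_iff₀ a b]; nlinarith
  obtain ⟨X, eX, dX, fX⟩ := cu x hx (by linarith)
  obtain ⟨Y, eY, dY, fY⟩ := cu y hy0 (by linarith)
  obtain ⟨Z, eZ, dZ, fZ⟩ := cu z hz0 hz
  have d1 := Sd_curve hR (κ := 1) hx hxy (by linarith) eX eY (by simpa using dX) (by simpa using dY)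
  have d2 := Sd_curve hR (κ := 1) hx (hxy.trans hyz) (by linarith) eX eZ (by simpa using dX) (by simpa using dZ)
  have d3 := Sd_curve hR (κ := 1) hy0 hyz (by linarith) eY eZ (by simpa using dY) (by simpa using dZ)
  have d4 := Sd_curve hR (κ := z) (x := x / z) (y := y / z) (by positivity) (by gcongr)
    (by rw [div_lt_one hz0]; exact hyz) (by rw [eX, eZ]) (by rw [eY, eZ]) 
    (hd_div hz0 eX eZ dX dZ) (hd_div hz0 eY eZ dY dZ)
  have p1 : 0 < 1 - x := by linarith
  have p2 : 0 < 1 - y := by linarith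
  have p3 : 0 < 1 - z := by linarith
  have p4 : 0 < y - x := by linarith
  have d5 := Sd_curve hR (κ := 1 - x) (x := (y - x) / (1 - x)) (y := (z - x) / (1 - x)) (by positivity)
    (by gcongr) (by rw [div_lt_one p1]; linarith) (by rw [eX, eY]) (by rw [eX, eZ]) 
    (hd_sub (by linarith) eX eY dX dY) (hd_sub (by linarith) eX eZ dX dZ)
  have d6 := Sd_curve hR (κ := 0) (t := 0) (X := fun τ => X τ * (1 - Z τ) / (Z τ * (1 - X τ)))
    (Y := fun τ => Y τ * (1 - Z τ) / (Z τ * (1 - Y τ))) (x := x * (1 - z) / (z * (1 - x))) (y := y * (1 - z) / (z * (1 - y)))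
    (by positivity) (by rw [div_lt_div_iff₀ (by positivity) (by positivity)]
                        have : 0 < z * (1 - z) * (y - x) := by positivity
                        nlinarith)
    (by rw [div_lt_one (by positivity)]; nlinarith) (by rw [eX, eZ]) (by rw [eY, eZ])
    (by simpa using hd_v (by linarith) hz0 eX eZ dX dZ) 
    (by simpa using hd_v (by linarith) hz0 eY eZ dY dZ)
  have D := ((((d1.fun_sub d2).fun_add d3).fun_sub d4).fun_sub d5).fun_add d6
  have E : (fun τ => R (X τ, Y τ) - R (X τ, Z τ) + R (Y τ, Z τ) - R (X τ / Z τ, Y τ / Z τ) 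
     - R ((Y τ - X τ) / (1 - X τ), (Z τ - X τ) / (1 - X τ))
    + R (X τ * (1 - Z τ) / (Z τ * (1 - X τ)), Y τ * (1 - Z τ) / (Z τ * (1 - Y τ)))) = fun _ => 0 := by
    funext τ
    apply h6
    · rw [fX]; exact sg_pos _
    · rw [fX, fY]; exact sg_lt (by linarith [lo x y hx hxy (by linarith)])
    · rw [fZ, fY]; exact sg_lt (by linarith [lo y z hy0 hyz (by linarith)])
    · rw [fZ]; exact sg_lt_one _
  have := D.unique (E ▸ hasDerivAt_const (0:ℝ) (0:ℝ))
  linarith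

theorem Sd_contDiff {R : ℝ × ℝ → ℝ} (hR : ContDiffOn ℝ 2 R P2) : ContDiffOn ℝ 1 (Sd R) P2 := by
  have h := hR.fderiv_of_isOpen isOpen_P2 (m := 1) (by norm_num)
  unfold Sd
  refine h.clm_apply ?_
  fun_prop

theorem coc_solve (ζ : ℝ × ℝ → ℝ) (hc : ContinuousOn ζ (Ioi 0 ×ˢ Ioi 0))
    (h : ∀ p q r : ℝ, 0 < p → 0 < q → 0 < r →
      ζ (p, q + r) - ζ (p + q, r) + ζ (q, r) - ζ (p, q) = 0) :
    ∃ e : ℝ → ℝ, ContinuousOn e (Ioi 0) ∧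
      ∀ p q : ℝ, 0 < p → 0 < q → ζ (p, q) = e p + e q - e (p + q) := by
  have c1 : ∀ r, 0 < r → ContinuousOn (fun p => ζ (p, r)) (Ioi 0) := fun r hr =>
    hc.comp (by fun_prop) (fun p hp => ⟨hp, hr⟩)
  have c2 : ∀ p, 0 < p → ContinuousOn (fun r => ζ (p, r)) (Ioi 0) := fun p hp =>
    hc.comp (by fun_prop) (fun r hr => ⟨hp, hr⟩)
  have ii : ∀ f : ℝ → ℝ, ContinuousOn f (Ioi 0) → ∀ a b : ℝ, 0 < a → 0 < b →
      IntervalIntegrable f volume a b := by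
    intro f hf a b ha hb
    apply (hf.mono _).intervalIntegrable
    intro t ht
    exact lt_of_lt_of_le (lt_min ha hb) ht.1
  have dI : ∀ f : ℝ → ℝ, ContinuousOn f (Ioi 0) → ∀ a b : ℝ, 0 < a → 0 < b →
      HasDerivAt (fun u => ∫ t in a..u, f t) (f b) b := by
    intro f hf a b ha hb
    apply intervalIntegral.integral_hasDerivAt_right (ii f hf a b ha hb)
    · exact hf.stronglyMeasurableAtFilter isOpen_Ioi _ hb
    · exact hf.continuousAt (Ioi_mem_nhds hb)
  set hh : ℝ → ℝ := fun p => ∫ t in (1:ℝ)..2, ζ (p, t) with hhdef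
  set Z : ℝ → ℝ := fun u => ∫ t in (1:ℝ)..u, ζ (t, 1) with hZ
  have dZ : ∀ u, 0 < u → HasDerivAt Z (ζ (u, 1)) u := fun u hu => 
    dI _ (c1 1 one_pos) 1 u one_pos hu
  have key : ∀ p q, 0 < p → 0 < q → (∫ t in (1 + q)..(2 + q), ζ (p, t))
      = hh p + Z (1 + p + q) - Z (1 + p) - Z (1 + q) := by
    intro p q hp hq
    set F : ℝ → ℝ := fun q => (∫ t in (1:ℝ)..(2 + q), ζ (p, t)) - (∫ t in (1:ℝ)..(1 + q), ζ (p, t))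
      - Z (1 + p + q) + Z (1 + q) with hF
    have dF : ∀ s, -1 < s → HasDerivAt F (ζ (p, 2 + s) - ζ (p, 1 + s) - ζ (1 + p + s, 1) + ζ (1 + s, 1)) s := by
      intro s hs
      have a1 := (dI _ (c2 p hp) 1 (2 + s) one_pos (by linarith)).comp_const_add 2 s
      have a2 := (dI _ (c2 p hp) 1 (1 + s) one_pos (by linarith)).comp_const_add 1 s
      have a3 := (dZ (1 + p + s) (by linarith)).comp_const_add (1 + p) s
      have a4 := (dZ (1 + s) (by linarith)).comp_const_add 1 s
      exact ((a1.fun_sub a2).fun_sub a3).fun_add a4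
    have dF0 : ∀ s ∈ Ioi (-1:ℝ), HasDerivAt F 0 s := by
      intro s hs
      have hs' : -1 < s := hs
      refine (dF s hs).congr_deriv ?_
      have := h p (1 + s) 1 hp (by linarith) one_pos
      rw [show 1 + s + 1 = 2 + s by ring, show p + (1 + s) = 1 + p + s by ring] at this
      linarith
    have e := (convex_Ioi (-1:ℝ)).is_const_of_fderivWithin_eq_zero (𝕜 := ℝ) (f := F)
      (fun s hs => (dF0 s hs).differentiableAt.differentiableWithinAt)
      (fun s hs => by
        rw [fderivWithin_of_isOpen isOpen_Ioi hs]
        ext; simp [(dF0 s hs).deriv])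
      (show (0:ℝ) ∈ Ioi (-1:ℝ) by simp) (show q ∈ Ioi (-1:ℝ) by simp; linarith)
    simp only [hF, add_zero, intervalIntegral.integral_same, sub_zero] at e
    have Z1 : Z 1 = 0 := by simp [hZ]
    rw [Z1] at e
    rw [← intervalIntegral.integral_interval_sub_left (ii _ (c2 p hp) 1 (2 + q) one_pos (by linarith))
      (ii _ (c2 p hp) 1 (1 + q) one_pos (by linarith))]
    simp only [hhdef]
    linarith
  refine ⟨fun p => hh p - Z (1 + p), ?_, ?_⟩
  · apply ContinuousOn.sub
    · intro p hp
      have hp' : 0 < p := hp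
      apply ContinuousAt.continuousWithinAt
      have : Continuous (fun s : ℝ => ∫ t in (1:ℝ)..2, ζ (max s (p / 2), max t 1)) := by
        apply intervalIntegral.continuous_parametric_intervalIntegral_of_continuous'
        simp only [Function.uncurry_def]
        exact hc.comp_continuous (by fun_prop) (fun s => ⟨lt_max_of_lt_right (half_pos hp'),
          lt_max_of_lt_right (b := s.2) (one_pos : (0:ℝ) < 1)⟩)
      refine (this.continuousAt (x := p)).congr ?_
      filter_upwards [Ioi_mem_nhds (show p / 2 < p by linarith)] with s hs
      apply intervalIntegral.integral_congr
      intro t ht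
      rw [uIcc_of_le (by norm_num)] at ht
      simp only
      rw [max_eq_left (le_of_lt hs), max_eq_left ht.1]
    · intro p hp
      have hp' : 0 < p := hp
      exact ((dZ (1 + p) (by linarith)).comp_const_add 1 p).continuousAt.continuousWithinAt
  · intro p q hp hq
    have hk := key p q hp hq
    have i1 : IntervalIntegrable (fun r => ζ (p, q + r)) volume 1 2 :=
      ii _ ((c2 p hp).comp (f := fun r => q + r) (by fun_prop) (fun r (hr : 0 < r) => by 
        show 0 < q + r; linarith)) 1 2 one_pos two_pos
    have i2 : IntervalIntegrable (fun r => ζ (p + q, r)) volume 1 2 :=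
      ii _ (c2 _ (by linarith)) 1 2 one_pos two_pos
    have i3 : IntervalIntegrable (fun r => ζ (q, r)) volume 1 2 :=
      ii _ (c2 _ (by linarith)) 1 2 one_pos two_pos
    have : ∫ r in (1:ℝ)..2, ζ (p, q) = (∫ r in (1:ℝ)..2, ζ (p, q + r)) - hh (p + q) + hh q := by
      simp only [hhdef]
      rw [← intervalIntegral.integral_sub i1 i2, ← intervalIntegral.integral_add (i1.sub i2) i3]
      apply intervalIntegral.integral_congr
      intro r hr
      rw [uIcc_of_le (by norm_num)] at hr
      have := h p q r hp hq (by linarith [hr.1])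
      simp only
      linarith
    rw [intervalIntegral.integral_comp_add_left (fun t => ζ (p, t)) q] at this
    rw [add_comm q 1, add_comm q 2, hk] at this
    simp only [intervalIntegral.integral_const, smul_eq_mul] at this
    simp only
    rw [show 1 + (p + q) = 1 + p + q by ring]
    linarith

/-- homogenization -/
noncomputable def TT (S : ℝ × ℝ → ℝ) (p : ℝ × ℝ × ℝ) : ℝ :=
  (p.1 + p.2.1 + p.2.2) * S (p.1 / (p.1 + p.2.1 + p.2.2), (p.1 + p.2.1) / (p.1 + p.2.1 + p.2.2))

/-- positive octant -/
def Oct : Set (ℝ × ℝ × ℝ) := {p | 0 < p.1 ∧ 0 < p.2.1 ∧ 0 < p.2.2}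

theorem isOpen_Oct : IsOpen Oct := by
  have h1 : IsOpen {p : ℝ × ℝ × ℝ | 0 < p.1} := isOpen_lt continuous_const (by fun_prop)
  have h2 : IsOpen {p : ℝ × ℝ × ℝ | 0 < p.2.1} := isOpen_lt continuous_const (by fun_prop)
  have h3 : IsOpen {p : ℝ × ℝ × ℝ | 0 < p.2.2} := isOpen_lt continuous_const (by fun_prop)
  exact h1.inter (h2.inter h3)

theorem TT_contDiff {S : ℝ × ℝ → ℝ} (hS : ContDiffOn ℝ 1 S P2) : ContDiffOn ℝ 1 (TT S) Oct := by
  unfold TT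
  have hn : ∀ p ∈ Oct, p.1 + p.2.1 + p.2.2 ≠ 0 := fun p hp => by
    obtain ⟨h1, h2, h3⟩ := hp; positivity
  apply ContDiffOn.mul (by fun_prop)
  apply hS.comp (t := P2) (f := fun p : ℝ × ℝ × ℝ =>
    (p.1 / (p.1 + p.2.1 + p.2.2), (p.1 + p.2.1) / (p.1 + p.2.1 + p.2.2)))
  · exact ContDiffOn.prodMk (ContDiffOn.div (by fun_prop) (by fun_prop) hn)
      (ContDiffOn.div (by fun_prop) (by fun_prop) hn)
  · rintro p ⟨h1, h2, h3⟩
    refine ⟨by simp only; positivity, ?_, ?_⟩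
    · simp only; gcongr; linarith
    · simp only; rw [div_lt_one (by positivity)]; linarith

theorem TT_hom (S : ℝ × ℝ → ℝ) {l a b c : ℝ} (hl : 0 < l)  :
    TT S (l * a, l * b, l * c) = l * TT S (a, b, c) := by
  unfold TT
  simp only
  have e1 : l * a + l * b + l * c = l * (a + b + c) := by ring
  have e2 : l * a + l * b = l * (a + b) := by ring
  rw [e1, e2, mul_div_mul_left _ _ hl.ne', mul_div_mul_left _ _ hl.ne']
  ring

theorem TT_five {S : ℝ × ℝ → ℝ} (h5 : ∀ x y z : ℝ, 0 < x → x < y → y < z → z < 1 →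
      S (x, y) - S (x, z) + S (y, z) - z * S (x / z, y / z)
      - (1 - x) * S ((y - x) / (1 - x), (z - x) / (1 - x)) = 0) {a b c d : ℝ}
    (ha : 0 < a) (hb : 0 < b) (hc : 0 < c) (hd : 0 < d) :
    TT S (a, b, c + d) - TT S (a, b + c, d) + TT S (a + b, c, d) - TT S (a, b, c)
      - TT S (b, c, d) = 0 := by
  have hn : 0 < a + b + c + d := by positivity
  have := h5 (a / (a + b + c + d)) ((a + b) / (a + b + c + d)) ((a + b + c) / (a + b + c + d))
    (by positivity) (div_lt_div_of_pos_right (by linarith) hn) (div_lt_div_of_pos_right (by linarith) hn)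
    (by rw [div_lt_one hn]; linarith)
  unfold TT
  simp only
  have e1 : a / (a + b + c + d) / ((a + b + c) / (a + b + c + d)) = a / (a + b + c) := by
    field_simp
  have e2 : (a + b) / (a + b + c + d) / ((a + b + c) / (a + b + c + d)) = (a + b) / (a + b + c) := by
    field_simp
  have e0 : 1 - a / (a + b + c + d) = (b + c + d) / (a + b + c + d) := by
    field_simp; ring
  have e3 : ((a + b) / (a + b + c + d) - a / (a + b + c + d)) / ((b + c + d) / (a + b + c + d))
    = b / (b + c + d) := by field_simp; ring
  have e4 : ((a + b + c) / (a + b + c + d) - a / (a + b + c + d)) / ((b + c + d) / (a + b + c + d))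
    = (b + c) / (b + c + d) := by field_simp; ring
  rw [e1, e2, e0, e3, e4] at this
  rw [show a + b + (c + d) = a + b + c + d by ring, show a + (b + c) + d = a + b + c + d by ring,
    show a + (b + c) = a + b + c by ring]
  have h2 := congrArg (fun t => (a + b + c + d) * t) this
  simp only [mul_zero] at h2
  rw [← h2]
  field_simp

/-- a-derivative -/
noncomputable def UU (S : ℝ × ℝ → ℝ) (p : ℝ × ℝ × ℝ) : ℝ := fderiv ℝ (TT S) p (1, 0, 0)

theorem UU_deriv {S : ℝ × ℝ → ℝ} (hS : ContDiffOn ℝ 1 S P2) {a b c k t : ℝ} {A : ℝ → ℝ} 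
    (ha : 0 < a) (hb : 0 < b) (hc : 0 < c) (eA : A t = a) (dA : HasDerivAt A k t) :
    HasDerivAt (fun τ => TT S (A τ, b, c)) (k * UU S (a, b, c)) t := by
  have h1 : DifferentiableAt ℝ (TT S) (a, b, c) :=
    ((TT_contDiff hS).contDiffAt (isOpen_Oct.mem_nhds ⟨ha, hb, hc⟩)).differentiableAt (by norm_num)
  have h := h1.hasFDerivAt
  rw [← eA] at h
  have h2 := h.comp_hasDerivAt t (dA.prodMk (hasDerivAt_const t (b, c)))
  refine h2.congr_deriv ?_
  rw [eA, UU]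
  have : ((k, 0) : ℝ × ℝ × ℝ) = k • (1, 0, 0) := by simp [Prod.ext_iff]
  rw [this, map_smul, smul_eq_mul]

theorem UU_cont {S : ℝ × ℝ → ℝ} (hS : ContDiffOn ℝ 1 S P2) : ContinuousOn (UU S) Oct := by
  have h := (TT_contDiff hS).continuousOn_fderiv_of_isOpen isOpen_Oct le_rfl
  unfold UU
  exact h.clm_apply continuousOn_const

theorem UU_hom {S : ℝ × ℝ → ℝ} (hS : ContDiffOn ℝ 1 S P2) {l a b c : ℝ} (hl : 0 < l) 
    (ha : 0 < a) (hb : 0 < b) (hc : 0 < c) : UU S (l * a, l * b, l * c) = UU S (a, b, c) := by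
  have d1 := (UU_deriv hS (k := 1) (t := a) (A := fun t => t) ha hb hc rfl (hasDerivAt_id a)).const_mul l
  have d2 := UU_deriv hS (k := l) (t := a) (A := fun t => l * t) (mul_pos hl ha) (mul_pos hl hb) (mul_pos hl hc) 
    rfl (by simpa using (hasDerivAt_id a).const_mul l)
  have e : (fun τ => TT S (l * τ, l * b, l * c)) = fun τ => l * TT S (τ, b, c) := by
    funext τ; exact TT_hom S hl
  rw [e] at d2
  have := d1.unique d2
  rw [one_mul] at this
  exact (mul_left_cancel₀ hl.ne' this).symm

theorem UU_four {S : ℝ × ℝ → ℝ} (hS : ContDiffOn ℝ 1 S P2)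
    (h5 : ∀ x y z : ℝ, 0 < x → x < y → y < z → z < 1 →
      S (x, y) - S (x, z) + S (y, z) - z * S (x / z, y / z)
      - (1 - x) * S ((y - x) / (1 - x), (z - x) / (1 - x)) = 0) {a b c d : ℝ}
    (ha : 0 < a) (hb : 0 < b) (hc : 0 < c) (hd : 0 < d) :
    UU S (a, b, c + d) - UU S (a, b + c, d) + UU S (a + b, c, d) - UU S (a, b, c) = 0 := by
  have d1 := UU_deriv hS (k := 1) (t := a) (A := fun t => t) ha hb (add_pos hc hd) rfl (hasDerivAt_id a)
  have d2 := UU_deriv hS (k := 1) (t := a) (A := fun t => t) ha (add_pos hb hc) hd rfl (hasDerivAt_id a)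
  have d3 := UU_deriv hS (k := 1) (t := a) (A := fun t => t + b) (add_pos ha hb) hc hd rfl 
    ((hasDerivAt_id a).add_const b)
  have d4 := UU_deriv hS (k := 1) (t := a) (A := fun t => t) ha hb hc rfl (hasDerivAt_id a)
  have D := (((d1.fun_sub d2).fun_add d3).fun_sub d4).fun_sub (hasDerivAt_const a (TT S (b, c, d)))
  have D0 := D.congr_of_eventuallyEq (f₁ := fun _ => (0:ℝ)) (by
    filter_upwards [Ioi_mem_nhds ha] with t ht
    exact (TT_five h5 ht hb hc hd).symm)
  have := D0.unique (hasDerivAt_const a (0:ℝ))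
  linarith

theorem UU_solve {S : ℝ × ℝ → ℝ} (hS : ContDiffOn ℝ 1 S P2)
    (h5 : ∀ x y z : ℝ, 0 < x → x < y → y < z → z < 1 →
      S (x, y) - S (x, z) + S (y, z) - z * S (x / z, y / z)
      - (1 - x) * S ((y - x) / (1 - x), (z - x) / (1 - x)) = 0) :
    ∃ e : ℝ → ℝ, ContinuousOn e (Ioi 0) ∧ ∀ a b c : ℝ, 0 < a → 0 < b → 0 < c →
      UU S (a, b, c) = e (Real.log ((a + b + c) / a)) - e (Real.log ((a + b) / a)) 
        - e (Real.log ((a + b + c) / (a + b))) := by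
  have hexp : ∀ p q : ℝ, 0 < q → 0 < Real.exp (p + q) - Real.exp p := fun p q hq => by
    have := Real.exp_lt_exp.2 (show p < p + q by linarith)
    linarith
  have hexp1 : ∀ q : ℝ, 0 < q → 0 < Real.exp q - 1 := fun q hq => by
    have := Real.one_lt_exp_iff.2 hq
    linarith
  obtain ⟨e, he, h⟩ := coc_solve 
    (fun p => UU S (1, Real.exp p.1 - 1, Real.exp (p.1 + p.2) - Real.exp p.1)) 
    (by
      apply (UU_cont hS).comp (by fun_prop)
      rintro p ⟨h1, h2⟩
      exact ⟨one_pos, hexp1 _ h1, hexp _ _ h2⟩) 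
    (by
      intro p q r hp hq hr
      have f := UU_four hS h5 one_pos (hexp1 p hp) (hexp p q hq) (hexp (p + q) r hr)
      have g := UU_hom hS (Real.exp_pos p) one_pos (hexp1 q hq) (hexp q r hr)
      simp only
      rw [← g]
      rw [← f]
      have e1 : Real.exp p * 1 = 1 + (Real.exp p - 1) := by ring
      have e2 : Real.exp p * (Real.exp q - 1) = Real.exp (p + q) - Real.exp p := by
        rw [Real.exp_add]; ring
      have e3 : Real.exp p * (Real.exp (q + r) - Real.exp q) = Real.exp (p + q + r) - Real.exp (p + q) := by
        rw [mul_sub, ← Real.exp_add, ← Real.exp_add, add_assoc]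
      rw [e1, e2, e3]
      rw [show Real.exp (p + q) - Real.exp p + (Real.exp (p + q + r) - Real.exp (p + q)) = Real.exp (p + (q + r)) - Real.exp p by rw [add_assoc]; ring,
        show Real.exp p - 1 + (Real.exp (p + q) - Real.exp p) = Real.exp (p + q) - 1 by ring])
  refine ⟨fun t => - e t, he.neg, ?_⟩
  intro a b c ha hb hc
  have hp : 0 < Real.log ((a + b) / a) := Real.log_pos (by rw [one_lt_div ha]; linarith)
  have hq : 0 < Real.log ((a + b + c) / (a + b)) := 
    Real.log_pos (by rw [one_lt_div (by positivity)]; linarith)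
  have := h _ _ hp hq
  have el : Real.log ((a + b) / a) + Real.log ((a + b + c) / (a + b)) = Real.log ((a + b + c) / a) := by
    rw [← Real.log_mul (by positivity) (by positivity)]; congr 1; field_simp
  simp only [el] at this
  rw [Real.exp_log (by positivity), Real.exp_log (by positivity)] at this
  have g := UU_hom hS ha one_pos (show 0 < (a + b) / a - 1 by 
    have : (a + b) / a - 1 = b / a := by field_simp; ring
    rw [this]; positivity) (show 0 < (a + b + c) / a - (a + b) / a by
    have : (a + b + c) / a - (a + b) / a = c / a := by field_simp; ring
    rw [this]; positivity)
  rw [← g] at this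
  rw [show a * 1 = a by ring, show a * ((a + b) / a - 1) = b by field_simp; ring,
    show a * ((a + b + c) / a - (a + b) / a) = c by field_simp; ring] at this
  rw [this]; ring

/-- one-dim coboundary -/
def dp (φ : ℝ → ℝ → ℝ) (a b c : ℝ) : ℝ := φ b c - φ (a + b) c + φ a (b + c) - φ a b

theorem dI_open {s : Set ℝ} (hs : IsOpen s) (hc : s.OrdConnected) {f : ℝ → ℝ} (hf : ContinuousOn f s)
    {a b : ℝ} (ha : a ∈ s) (hb : b ∈ s) : HasDerivAt (fun u => ∫ t in a..u, f t) (f b) b := by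
  apply intervalIntegral.integral_hasDerivAt_right
  · apply (hf.mono _).intervalIntegrable
    exact hc.uIcc_subset ha hb
  · exact hf.stronglyMeasurableAtFilter hs _ hb
  · exact hf.continuousAt (hs.mem_nhds hb)

theorem const_of_deriv_zero {s : Set ℝ} (hs : IsOpen s) (hc : Convex ℝ s) {f : ℝ → ℝ}
    (hf : ∀ x ∈ s, HasDerivAt f 0 x) {a b : ℝ} (ha : a ∈ s) (hb : b ∈ s) : f a = f b :=
  hc.is_const_of_fderivWithin_eq_zero (𝕜 := ℝ) (f := f)
      (fun s hs => (hf s hs).differentiableAt.differentiableWithinAt)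
      (fun s hs' => by
        rw [fderivWithin_of_isOpen hs hs']
        ext; simp [(hf s hs').deriv]) ha hb

theorem S_solve {S : ℝ × ℝ → ℝ} (hS : ContDiffOn ℝ 1 S P2)
    (h5 : ∀ x y z : ℝ, 0 < x → x < y → y < z → z < 1 →
      S (x, y) - S (x, z) + S (y, z) - z * S (x / z, y / z)
      - (1 - x) * S ((y - x) / (1 - x), (z - x) / (1 - x)) = 0) :
    ∃ φ : ℝ → ℝ → ℝ, (∀ l a b : ℝ, 0 < l → φ (l * a) (l * b) = l * φ a b) ∧
      ContinuousOn (fun t => φ t (1 - t)) (Ioo 0 1) ∧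
      ∀ x y : ℝ, 0 < x → x < y → y < 1 →
        S (x, y) = φ (y - x) (1 - y) - φ y (1 - y) + φ x (1 - x) - φ x (y - x) := by
  obtain ⟨e, he, hU⟩ := UU_solve hS h5
  set j : ℝ → ℝ := fun t => e (Real.log ((1 + t) / t)) with hj
  have jc : ContinuousOn j (Ioi 0) := by
    apply he.comp
    · apply ContinuousOn.log
      · exact ContinuousOn.div (by fun_prop) (by fun_prop) (fun t ht => ne_of_gt ht)
      · intro t ht
        have ht' : 0 < t := ht
        positivity
    · intro t ht
      have ht' : 0 < t := ht
      exact Real.log_pos (by rw [one_lt_div ht']; linarith)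
  set J : ℝ → ℝ := fun r => ∫ t in (1:ℝ)..r, j t with hJ
  have dJ : ∀ r, 0 < r → HasDerivAt J (j r) r := fun r hr =>
    dI_open isOpen_Ioi ordConnected_Ioi jc (by simp) hr
  set φ : ℝ → ℝ → ℝ := fun a b => b * J (a / b) with hφ
  have φh : ∀ l a b : ℝ, 0 < l → φ (l * a) (l * b) = l * φ a b := by
    intro l a b hl
    simp only [hφ]
    rw [mul_div_mul_left _ _ hl.ne']; ring
  have φd : ∀ a b, 0 < a → 0 < b → HasDerivAt (fun t => φ t b) (e (Real.log ((a + b) / a))) a := by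
    intro a b ha hb
    have h1 : HasDerivAt (fun t => t / b) (1 / b) a := (hasDerivAt_id a).div_const b
    have h2 := ((dJ (a / b) (by positivity)).comp a h1).const_mul b
    refine h2.congr_deriv ?_
    simp only [hj]
    rw [show (1 + a / b) / (a / b) = (a + b) / a by field_simp; ring]
    field_simp
  -- W
  have cst : ∀ a a' b c, 0 < a → 0 < a' → 0 < b → 0 < c → 
      TT S (a, b, c) - dp φ a b c = TT S (a', b, c) - dp φ a' b c := by
    intro a a' b c ha ha' hb hc
    apply const_of_deriv_zero (s := Ioi 0) isOpen_Ioi (convex_Ioi 0) (f := fun a => TT S (a, b, c) - dp φ a b c)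
      _ ha ha'
    intro t ht
    have ht' : 0 < t := ht
    have d1 := UU_deriv hS (k := 1) (t := t) (A := fun t => t) ht' hb hc rfl (hasDerivAt_id t)
    have d2 : HasDerivAt (fun u => φ (u + b) c) (e (Real.log ((t + b + c) / (t + b)))) t :=
      (φd (t + b) c (by linarith) hc).comp_add_const t b
    have d3 := φd t (b + c) ht' (by linarith)
    have d4 := φd t b ht' hb
    have D := d1.fun_sub ((((hasDerivAt_const t (φ b c)).fun_sub d2).fun_add d3).fun_sub d4)
    refine D.congr_deriv ?_
    rw [hU t b c ht' hb hc, ← add_assoc]; ring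
  set W : ℝ → ℝ → ℝ := fun b c => TT S (1, b, c) - dp φ 1 b c with hW
  have TW : ∀ a b c, 0 < a → 0 < b → 0 < c → TT S (a, b, c) = dp φ a b c + W b c := by
    intro a b c ha hb hc
    have := cst a 1 b c ha one_pos hb hc
    simp only [hW]; linarith
  have Wh : ∀ l b c, 0 < l → 0 < b → 0 < c → W (l * b) (l * c) = l * W b c := by
    intro l b c hl hb hc
    have h1 := TW (l * 1) (l * b) (l * c) (by positivity) (by positivity) (by positivity)
    have h2 := TW 1 b c one_pos hb hc
    rw [TT_hom S hl, h2] at h1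
    have h3 : dp φ (l * 1) (l * b) (l * c) = l * dp φ 1 b c := by
      simp only [dp]
      rw [← mul_add, ← mul_add, φh _ _ _ hl, φh _ _ _ hl, φh _ _ _ hl, φh _ _ _ hl]; ring
    rw [h3] at h1
    linarith
  have Wc : ∀ b c d, 0 < b → 0 < c → 0 < d → W b (c + d) = W (b + c) d + W b c := by
    intro b c d hb hc hd
    have h1 := TT_five h5 one_pos hb hc hd
    rw [TW _ _ _ one_pos hb (add_pos hc hd), TW _ _ _ one_pos (add_pos hb hc) hd,
      TW _ _ _ (add_pos one_pos hb) hc hd, TW _ _ _ one_pos hb hc, TW _ _ _ hb hc hd] at h1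
    simp only [dp, ← add_assoc] at h1
    linarith
  set ν : ℝ → ℝ := fun u => W 1 (u - 1) with hν
  have Wν : ∀ b c, 0 < b → 0 < c → W b c = b * ν ((b + c) / b) := by
    intro b c hb hc
    have := Wh b 1 (c / b) hb one_pos (by positivity)
    simp only [hν]
    rw [show (b + c) / b - 1 = c / b by field_simp; ring, ← this]
    congr 1
    · ring
    · field_simp
  have νm : ∀ u l, 1 < u → 1 < l → ν (u * l) = u * ν l + ν u := by
    intro u l hu hl
    have hp : 0 < u * (l - 1) := mul_pos (by linarith) (by linarith)
    have h1 := Wc 1 (u - 1) (u * (l - 1)) one_pos (by linarith) hp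
    rw [Wν (1 + (u - 1)) _ (by linarith) hp] at h1
    rw [show 1 + (u - 1) = u by ring, show (u + u * (l - 1)) / u = l by field_simp; ring] at h1
    simp only [hν] at h1 ⊢
    rw [← h1]; congr 1; ring
  have νl : ∀ u, 1 < u → ν u = (u - 1) * ν 2 := by
    intro u hu
    have h1 := νm u 2 hu one_lt_two
    have h2 := νm 2 u one_lt_two hu
    rw [mul_comm 2 u] at h2
    linarith
  have Wl : ∀ b c, 0 < b → 0 < c → W b c = ν 2 * c := by
    intro b c hb hc
    rw [Wν b c hb hc, νl _ (by rw [one_lt_div hb]; linarith)]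
    field_simp; ring
  refine ⟨fun a b => φ a b + ν 2 * b, ?_, ?_, ?_⟩
  · intro l a b hl
    simp only [φh l a b hl]; ring
  · apply ContinuousOn.add _ (by fun_prop)
    simp only [hφ]
    apply ContinuousOn.mul (by fun_prop)
    intro t ht
    have h1 : 0 < 1 - t := by linarith [ht.2]
    have h2 : 0 < t := ht.1
    apply ContinuousAt.continuousWithinAt
    apply ContinuousAt.comp (f := fun t => t / (1 - t)) (g := J)
    · exact (dJ (t / (1 - t)) (by positivity)).continuousAt
    · exact ContinuousAt.div (by fun_prop) (by fun_prop) h1.ne'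
  · intro x y hx hxy hy
    have h := TW x (y - x) (1 - y) hx (by linarith) (by linarith)
    rw [Wl _ _ (by linarith) (by linarith)] at h
    simp only [TT, dp] at h
    rw [show x + (y - x) + (1 - y) = 1 by ring, show x + (y - x) = y by ring,
      show y - x + (1 - y) = 1 - x by ring, div_one, div_one, one_mul] at h
    rw [h]; ring

theorem stage2 (R : ℝ × ℝ → ℝ) (hR : ContDiffOn ℝ 2 R P2) (h6 : H6 R) :
    ∃ L θ : ℝ → ℝ, (∀ x ∈ Ioo (0:ℝ) 1, DifferentiableAt ℝ L x) ∧
      (∀ x ∈ Ioo (0:ℝ) 1, DifferentiableAt ℝ θ x) ∧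
      ∀ x y : ℝ, 0 < x → x < y → y < 1 →
        R (x, y) = dl L x y + θ (x * (1 - y) / (y * (1 - x))) := by
  have hRd : ∀ p ∈ P2, DifferentiableAt ℝ R p := fun p hp =>
    (hR.contDiffAt (isOpen_P2.mem_nhds hp)).differentiableAt (by norm_num)
  obtain ⟨φ, φh, φc, hS⟩ := S_solve (Sd_contDiff hR) (fun x y z a b c d => Sd_five hRd h6 a b c d)
  set g : ℝ → ℝ := fun t => φ t (1 - t) / (t * (1 - t)) with hg
  have gc : ContinuousOn g (Ioo 0 1) := by
    apply φc.div (by fun_prop)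
    intro t ht
    have h1 : 0 < 1 - t := by linarith [ht.2]
    exact mul_ne_zero ht.1.ne' h1.ne'
  set L : ℝ → ℝ := fun x => ∫ t in (1/2:ℝ)..x, g t with hL
  have dL : ∀ x ∈ Ioo (0:ℝ) 1, HasDerivAt L (g x) x := fun x hx =>
    dI_open isOpen_Ioo ordConnected_Ioo gc (by norm_num) hx
  have dLc : ∀ (X : ℝ → ℝ) (x t κ : ℝ), 0 < κ → x ∈ Ioo (0:ℝ) 1 → X t = x →
      HasDerivAt X (κ * (x * (1 - x))) t → HasDerivAt (fun τ => L (X τ)) (φ (κ * x) (κ * (1 - x))) t := by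
    intro X x t κ hκ hx eX dX
    have := (eX ▸ dL x hx : HasDerivAt L (g x) (X t)).comp t dX
    refine this.congr_deriv ?_
    rw [φh _ _ _ hκ]
    have h1 : 1 - x ≠ 0 := by linarith [hx.2]
    have h2 : x ≠ 0 := hx.1.ne'
    simp only [hg]; field_simp
  refine ⟨L, fun u => R (u / (1 + u), 1 / 2) - dl L (u / (1 + u)) (1 / 2), 
    fun x hx => (dL x hx).differentiableAt, ?_, ?_⟩
  · intro u hu
    have hu0 := hu.1
    have hu1 := hu.2
    have dL' := fun x hx => (dL x hx).differentiableAt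
    have ud : DifferentiableAt ℝ (fun u : ℝ => u / (1 + u)) u :=
      DifferentiableAt.fun_div (by fun_prop) (by fun_prop) (by positivity)
    have k1 : u / (1 + u) < 1 / 2 := by rw [div_lt_div_iff₀ (by positivity) (by positivity)]; linarith
    have k0 : 0 < u / (1 + u) := by positivity
    have k2 : 0 < 1 - u / (1 + u) := by linarith
    have c : ∀ (X : ℝ → ℝ), X u ∈ Ioo (0:ℝ) 1 → DifferentiableAt ℝ X u → DifferentiableAt ℝ (fun u => L (X u)) u :=
      fun X hX hd => DifferentiableAt.comp (g := L) u (dL' _ hX) hd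
    apply DifferentiableAt.fun_sub
    · apply DifferentiableAt.comp (g := R) u
      · exact hRd _ ⟨k0, k1, by norm_num⟩
      · exact ud.prodMk (differentiableAt_const _)
    · unfold dl
      refine ((((c _ ?_ ?_).fun_sub (differentiableAt_const _)).fun_add (c _ ?_ ?_)).fun_sub (c _ ?_ ?_)).fun_add (c _ ?_ ?_)
      · refine ⟨div_pos (by linarith) k2, ?_⟩
        rw [div_lt_one k2]; linarith
      · exact DifferentiableAt.fun_div (by fun_prop) (by fun_prop) k2.ne'
      · exact ⟨k0, by linarith⟩
      · exact ud
      · exact ⟨by positivity, by rw [div_lt_one (by norm_num)]; exact k1⟩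
      · fun_prop
      · refine ⟨by positivity, ?_⟩
        rw [div_lt_one (by positivity)]; linarith
      · exact DifferentiableAt.fun_div (by fun_prop) (by fun_prop) (by positivity)
  · intro x y hx hxy hy
    have hy0 : 0 < y := by linarith
    have := flow_const (fun p => R p - dl L p.1 p.2) ?_ x y hx hxy hy
    · simp only at this; linarith
    clear hx hxy hy hy0 x y
    intro x y hx hxy hy X Y t eX eY dX dY
    have hy0 : 0 < y := by linarith
    have h1x : 0 < 1 - x := by linarith
    have h1y : 0 < 1 - y := by linarith
    have a0 := Sd_curve hRd (κ := 1) hx hxy hy eX eY (by simpa using dX) (by simpa using dY)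
    have a1 := dLc _ ((y - x) / (1 - x)) t (1 - x) (by linarith) ⟨div_pos (by linarith) h1x,
      by rw [div_lt_one h1x]; linarith⟩ (by rw [eX, eY]) (hd_sub (by linarith) eX eY dX dY)
    have a2 := dLc Y y t 1 one_pos ⟨hy0, hy⟩ eY (by simpa using dY)
    have a3 := dLc X x t 1 one_pos ⟨hx, by linarith⟩ eX (by simpa using dX)
    have a4 := dLc _ (x / y) t y hy0 ⟨by positivity, by rw [div_lt_one hy0]; exact hxy⟩ (by rw [eX, eY])
      (hd_div hy0 eX eY dX dY)
    have a5 : HasDerivAt (fun τ => L (X τ * (1 - Y τ) / (Y τ * (1 - X τ)))) 0 t := by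
      have h := dL (x * (1 - y) / (y * (1 - x))) ⟨by positivity, by 
        rw [div_lt_one (by positivity)]; nlinarith⟩
      have h0 := hd_v (by linarith) hy0 eX eY dX dY
      have := HasDerivAt.comp (h₂ := L) t (h₂' := g (x * (1 - y) / (y * (1 - x)))) (by rw [eX, eY]; exact h) h0
      exact this.congr_deriv (mul_zero _)
    have D := a0.fun_sub ((((a1.fun_sub a2).fun_add a3).fun_sub a4).fun_add a5)
    refine D.congr_deriv ?_
    rw [hS x y hx hxy hy]
    rw [show (1 - x) * ((y - x) / (1 - x)) = y - x by field_simp,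
      show (1 - x) * (1 - (y - x) / (1 - x)) = 1 - y by field_simp; ring,
      show y * (x / y) = x by field_simp, show y * (1 - x / y) = y - x by field_simp]
    simp only [one_mul]
    ring

theorem dl_rho (L : ℝ → ℝ) {x y : ℝ} (hx : 0 < x) (hxy : x < y) (hy : y < 1) :
    dl L (1 - y) ((1 - y) / (1 - x)) = L (x * (1 - y) / (y * (1 - x))) - L ((1 - y) / (1 - x))
      + L (1 - y) - L (1 - x) + L (1 - x / y) := by
  have hy0 : 0 < y := by linarith
  have h1x : 0 < 1 - x := by linarith
  have h1y : 0 < 1 - y := by linarith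
  have h3 : 0 < y - x := by linarith
  unfold dl
  have e0 : 1 - (1 - y) / (1 - x) = (y - x) / (1 - x) := by field_simp; ring
  have e1 : ((1 - y) / (1 - x) - (1 - y)) / (1 - (1 - y)) = x * (1 - y) / (y * (1 - x)) := by
    rw [show 1 - (1 - y) = y by ring]; field_simp; ring
  have e2 : (1 - y) / ((1 - y) / (1 - x)) = 1 - x := by field_simp
  have e3 : (1 - y) * (1 - (1 - y) / (1 - x)) / ((1 - y) / (1 - x) * (1 - (1 - y))) = 1 - x / y := by
    rw [e0, show 1 - (1 - y) = y by ring]; field_simp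
  rw [e1, e2, e3]

theorem v_rho {x y : ℝ} (hx : 0 < x) (hxy : x < y) (hy : y < 1) :
    (1 - y) * (1 - (1 - y) / (1 - x)) / ((1 - y) / (1 - x) * (1 - (1 - y))) = 1 - x / y := by
  have hy0 : 0 < y := by linarith
  have h1x : 0 < 1 - x := by linarith
  have h1y : 0 < 1 - y := by linarith
  have e0 : 1 - (1 - y) / (1 - x) = (y - x) / (1 - x) := by field_simp; ring
  rw [e0, show 1 - (1 - y) = y by ring]; field_simp

theorem rho_mem {x y : ℝ} (hx : 0 < x) (hxy : x < y) (hy : y < 1) :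
    0 < 1 - y ∧ 1 - y < (1 - y) / (1 - x) ∧ (1 - y) / (1 - x) < 1 := by
  have h1x : 0 < 1 - x := by linarith
  have h1y : 0 < 1 - y := by linarith
  refine ⟨h1y, ?_, ?_⟩
  · rw [lt_div_iff₀ h1x]; nlinarith
  · rw [div_lt_one h1x]; linarith

theorem dilog : ∃ L : ℝ → ℝ, (∀ x ∈ Ioo (0:ℝ) 1, DifferentiableAt ℝ L x) ∧
    (∀ x ∈ Ioo (0:ℝ) 1, L (1 - x) = - L x) ∧ ∃ K : ℝ, K ≠ 0 ∧
      ∀ x y : ℝ, 0 < x → x < y → y < 1 → dl L x y = K := by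
  set φ : ℝ → ℝ → ℝ := fun a b => Real.negMulLog a + Real.negMulLog b - Real.negMulLog (a + b) with hφ
  have φh : ∀ l a b : ℝ, 0 < l → φ (l * a) (l * b) = l * φ a b := by
    intro l a b hl
    simp only [hφ]
    rw [← mul_add, Real.negMulLog_mul, Real.negMulLog_mul, Real.negMulLog_mul]; ring
  have φc : ContinuousOn (fun t => φ t (1 - t)) (Ioo 0 1) := by
    apply Continuous.continuousOn
    simp only [hφ]
    have := Real.continuous_negMulLog
    fun_prop
  set g : ℝ → ℝ := fun t => φ t (1 - t) / (t * (1 - t)) with hg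
  have gc : ContinuousOn g (Ioo 0 1) := by
    apply φc.div (by fun_prop)
    intro t ht
    have h1 : 0 < 1 - t := by linarith [ht.2]
    exact mul_ne_zero ht.1.ne' h1.ne'
  have gpos : ∀ t ∈ Ioo (0:ℝ) 1, 0 < g t := by
    intro t ht
    have h0 : 0 < t := ht.1
    have h1 : 0 < 1 - t := by linarith [ht.2]
    simp only [hg, hφ]
    apply div_pos _ (by positivity)
    simp only [Real.negMulLog, add_sub_cancel, Real.log_one]
    have l1 := Real.log_neg h0 ht.2
    have l2 := Real.log_neg h1 (by linarith)
    nlinarith [mul_pos h0 (neg_pos.2 l1), mul_pos h1 (neg_pos.2 l2)]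
  have gsym : ∀ t, g (1 - t) = g t := by
    intro t
    simp only [hg, hφ]
    rw [show 1 - (1 - t) = t by ring, mul_comm, add_comm (1 - t) t]
    ring
  set L : ℝ → ℝ := fun x => ∫ t in (1/2:ℝ)..x, g t with hL
  have dL : ∀ x ∈ Ioo (0:ℝ) 1, HasDerivAt L (g x) x := fun x hx =>
    dI_open isOpen_Ioo ordConnected_Ioo gc (by norm_num) hx
  have dLc : ∀ (X : ℝ → ℝ) (x t κ : ℝ), 0 < κ → x ∈ Ioo (0:ℝ) 1 → X t = x →
      HasDerivAt X (κ * (x * (1 - x))) t → HasDerivAt (fun τ => L (X τ)) (φ (κ * x) (κ * (1 - x))) t := by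
    intro X x t κ hκ hx eX dX
    have := (eX ▸ dL x hx : HasDerivAt L (g x) (X t)).comp t dX
    refine this.congr_deriv ?_
    rw [φh _ _ _ hκ]
    have h1 : 1 - x ≠ 0 := by linarith [hx.2]
    have h2 : x ≠ 0 := hx.1.ne'
    simp only [hg]; field_simp
  have hanti : ∀ x, L (1 - x) = - L x := by
    intro x
    simp only [hL]
    have h := intervalIntegral.integral_comp_sub_left (a := 1 / 2) (b := x) g 1
    simp only [gsym] at h
    rw [h, intervalIntegral.integral_symm (1 - x)]
    norm_num
  have hflow : ∀ x y : ℝ, 0 < x → x < y → y < 1 → dl L x y = 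
      dl L ((x * (1 - y) / (y * (1 - x))) / (1 + (x * (1 - y) / (y * (1 - x))))) (1 / 2) := by
    intro x y hx hxy hy
    refine flow_const (fun p => dl L p.1 p.2) ?_ x y hx hxy hy
    clear hx hxy hy x y
    intro x y hx hxy hy X Y t eX eY dX dY
    have hy0 : 0 < y := by linarith
    have h1x : 0 < 1 - x := by linarith
    have h1y : 0 < 1 - y := by linarith
    have a1 := dLc _ ((y - x) / (1 - x)) t (1 - x) (by linarith) ⟨div_pos (by linarith) h1x,
      by rw [div_lt_one h1x]; linarith⟩ (by rw [eX, eY]) (hd_sub (by linarith) eX eY dX dY)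
    have a2 := dLc Y y t 1 one_pos ⟨hy0, hy⟩ eY (by simpa using dY)
    have a3 := dLc X x t 1 one_pos ⟨hx, by linarith⟩ eX (by simpa using dX)
    have a4 := dLc _ (x / y) t y hy0 ⟨by positivity, by rw [div_lt_one hy0]; exact hxy⟩ (by rw [eX, eY])
      (hd_div hy0 eX eY dX dY)
    have a5 : HasDerivAt (fun τ => L (X τ * (1 - Y τ) / (Y τ * (1 - X τ)))) 0 t := by
      have h := dL (x * (1 - y) / (y * (1 - x))) ⟨by positivity, by 
        rw [div_lt_one (by positivity)]; nlinarith⟩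
      have h0 := hd_v (by linarith) hy0 eX eY dX dY
      have := HasDerivAt.comp (h₂ := L) t (h₂' := g (x * (1 - y) / (y * (1 - x)))) (by rw [eX, eY]; exact h) h0
      exact this.congr_deriv (mul_zero _)
    have D := ((((a1.fun_sub a2).fun_add a3).fun_sub a4).fun_add a5)
    refine D.congr_deriv ?_
    rw [show (1 - x) * ((y - x) / (1 - x)) = y - x by field_simp,
      show (1 - x) * (1 - (y - x) / (1 - x)) = 1 - y by field_simp; ring,
      show y * (x / y) = x by field_simp, show y * (1 - x / y) = y - x by field_simp]
    simp only [one_mul, hφ]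
    rw [show y - x + (1 - y) = 1 - x by ring, show x + (1 - x) = 1 by ring,
      show y + (1 - y) = 1 by ring, show x + (y - x) = y by ring]
    ring
  set θ : ℝ → ℝ := fun v => dl L (v / (1 + v)) (1 / 2) with hθ
  have hst : ∀ u u' : ℝ, 0 < u → 0 < u' → u + u' < 1 → θ u = θ u' := by
    intro u u' hu hu' huu
    have h1 : 0 < 1 - u := by linarith
    have h2 : 0 < 1 - u' := by linarith
    have h3 : 0 < 1 - u - u' := by linarith
    set y := (1 - u - u') / ((1 - u') * (1 - u)) with hy
    set x := (1 - u - u') / (1 - u) with hx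
    have hx0 : 0 < x := by positivity
    have hxy : x < y := by
      rw [hx, hy, div_lt_div_iff₀ h1 (by positivity)]
      have : 0 < (1 - u - u') * (1 - u) * u' := by positivity
      nlinarith
    have hy1 : y < 1 := by
      rw [hy, div_lt_one (by positivity)]
      nlinarith
    have a := hflow x y hx0 hxy hy1
    obtain ⟨b1, b2, b3⟩ := rho_mem hx0 hxy hy1
    have b := hflow _ _ b1 b2 b3
    rw [v_rho hx0 hxy hy1, dl_rho L hx0 hxy hy1, hanti y, hanti x, hanti (x / y)] at b
    have hyne : 0 < y := hx0.trans hxy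
    have h1x : 0 < 1 - x := by linarith
    have c1 : x * (1 - y) / (y * (1 - x)) = u := by
      have e1 : 1 - y = u * u' / ((1 - u') * (1 - u)) := by rw [hy]; field_simp; ring
      have e2 : 1 - x = u' / (1 - u) := by rw [hx]; field_simp; ring
      rw [e1, e2, hx, hy]; field_simp
    have c2 : 1 - x / y = u' := by
      rw [hx, hy]; field_simp; ring
    rw [c1] at a b
    rw [c2] at b
    have c3 : (1 - y) / (1 - x) = 1 - (y - x) / (1 - x) := by field_simp; ring
    rw [c3, hanti] at b
    simp only [hθ]
    rw [← a, ← b]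
    unfold dl
    rw [c1]
    ring
  have hcst : ∀ u u', 0 < u → u < 1 → 0 < u' → u' < 1 → θ u = θ u' := by
    intro u u' h0 h1 h0' h1'
    set m := min (1 - u) (1 - u') / 2 with hm
    have m1 : m < 1 - u := by
      have := min_le_left (1 - u) (1 - u'); linarith
    have m2 : m < 1 - u' := by
      have := min_le_right (1 - u) (1 - u'); linarith
    have m0 : 0 < m := half_pos (lt_min (by linarith) (by linarith))
    rw [hst u m h0 m0 (by linarith), hst u' m h0' m0 (by linarith)]
  have v_mem : ∀ x y : ℝ, 0 < x → x < y → y < 1 → 0 < x * (1 - y) / (y * (1 - x)) ∧ 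
      x * (1 - y) / (y * (1 - x)) < 1 := by
    intro x y hx hxy hy
    have hy0 : 0 < y := by linarith
    have h1x : 0 < 1 - x := by linarith
    have h1y : 0 < 1 - y := by linarith
    exact ⟨by positivity, by rw [div_lt_one (by positivity)]; nlinarith⟩
  set u : ℝ := (3 - Real.sqrt 5) / 2 with hu
  have s5 : Real.sqrt 5 ^ 2 = 5 := Real.sq_sqrt (by norm_num)
  have s5a : 2 < Real.sqrt 5 := Real.lt_sqrt (by norm_num) |>.2 (by norm_num)
  have s5b : Real.sqrt 5 < 3 := Real.sqrt_lt' (by norm_num) |>.2 (by norm_num)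
  have u0 : 0 < u := by rw [hu]; linarith
  have u1 : u < 1 / 2 := by rw [hu]; linarith
  have uq : u ^ 2 - 3 * u + 1 = 0 := by rw [hu]; nlinarith
  have K5 : dl L u (1 - u) = 5 * L u := by
    have h1 : 0 < 1 - u := by linarith
    unfold dl
    have e1 : (1 - u - u) / (1 - u) = u := by rw [div_eq_iff h1.ne']; linarith
    have e2 : u / (1 - u) = 1 - u := by rw [div_eq_iff h1.ne']; linarith
    have e3 : u * (1 - (1 - u)) / ((1 - u) * (1 - u)) = u := by
      rw [div_eq_iff (by positivity)]; nlinarith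
    rw [e1, e2, e3, hanti]; ring
  have Lneg : L u < 0 := by
    have : 0 < ∫ t in u..(1/2), g t := by
      apply intervalIntegral.intervalIntegral_pos_of_pos_on
      · apply (gc.mono _).intervalIntegrable
        exact ordConnected_Ioo.uIcc_subset ⟨u0, by linarith⟩ (by norm_num)
      · intro t ht
        exact gpos t ⟨by linarith [ht.1], by linarith [ht.2]⟩
      · exact u1
    rw [intervalIntegral.integral_symm] at this
    linarith
  refine ⟨L, fun x hx => (dL x hx).differentiableAt, fun x _ => hanti x, 5 * L u, by linarith [Lneg] |> fun (h : 5 * L u < 0) => h.ne, ?_⟩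
  intro x y hx hxy hy
  rw [← K5, hflow x y hx hxy hy, hflow u (1 - u) u0 (by linarith) (by linarith)]
  have p := v_mem x y hx hxy hy
  have q := v_mem u (1 - u) u0 (by linarith) (by linarith)
  exact hcst _ _ p.1 p.2 q.1 q.2

theorem H6_of {R : ℝ × ℝ → ℝ}
    (h6 : ∀ x y z : ℝ, 0 < x → x < y → y < z → z < 1 →
      R (x, y) - R (x, z) + R (y, z)
        - R (x / z, y / z) - R ((z - 1) / (x - 1), (z - 1) / (y - 1))
        + R (x * (z - 1) / (z * (x - 1)), y * (z - 1) / (z * (y - 1))) = 0)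
    (hsym : ∀ x y : ℝ, 0 < x → x < y → y < 1 →
      R (1 - y, (1 - y) / (1 - x)) = R (x, y)) : H6 R := by
  intro x y z hx hxy hyz hz
  have p1 : 0 < 1 - x := by linarith
  have p2 : 0 < 1 - y := by linarith
  have p3 : 0 < 1 - z := by linarith
  have p4 : 0 < y - x := by linarith
  have hz0 : 0 < z := by linarith
  have hy0 : 0 < y := by linarith
  have h := h6 x y z hx hxy hyz hz
  have s := hsym ((y - x) / (1 - x)) ((z - x) / (1 - x)) (by positivity) (by gcongr)
    (by rw [div_lt_one p1]; linarith)
  have f0 : 1 - (y - x) / (1 - x) = (1 - y) / (1 - x) := by field_simp; ring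
  have f0' : 1 - (z - x) / (1 - x) = (1 - z) / (1 - x) := by field_simp; ring
  rw [f0, f0', show (1 - z) / (1 - x) / ((1 - y) / (1 - x)) = (1 - z) / (1 - y) by field_simp] at s
  rw [← s]
  have n1 : ∀ a b : ℝ, (a - 1) / (b - 1) = (1 - a) / (1 - b) := fun a b => by
    rw [← neg_sub 1 a, ← neg_sub 1 b, neg_div_neg_eq]
  have n2 : ∀ a b c : ℝ, a * (c - 1) / (c * (b - 1)) = a * (1 - c) / (c * (1 - b)) := fun a b c => by
    rw [← neg_sub 1 c, ← neg_sub 1 b, mul_neg, mul_neg, neg_div_neg_eq]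
  rw [n1, n1, n2, n2] at h
  exact h

theorem sym_const {R : ℝ × ℝ → ℝ} 
    (hsym : ∀ x y : ℝ, 0 < x → x < y → y < 1 →
      R (1 - y, (1 - y) / (1 - x)) = R (x, y)) {L θ : ℝ → ℝ}
    (hθ : ∀ x ∈ Ioo (0:ℝ) 1, DifferentiableAt ℝ θ x)
    (hR : ∀ x y : ℝ, 0 < x → x < y → y < 1 →
        R (x, y) = dl L x y + θ (x * (1 - y) / (y * (1 - x)))) :
    ∃ k t : ℝ, (∀ x ∈ Ioo (0:ℝ) 1, L x + L (1 - x) = 2 * k) ∧ ∀ x ∈ Ioo (0:ℝ) 1, θ x = t := by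
  set p : ℝ → ℝ := fun x => L x + L (1 - x) with hp
  have psym : ∀ x, p (1 - x) = p x := fun x => by
    simp only [hp]; rw [show 1 - (1 - x) = x by ring]; ring
  have E : ∀ x y : ℝ, 0 < x → x < y → y < 1 → p ((1 - y) / (1 - x)) - p y + p x - p (x / y)
      + θ (x * (1 - y) / (y * (1 - x))) - θ (1 - x / y) = 0 := by
    intro x y hx hxy hy
    have h1x : 0 < 1 - x := by linarith
    obtain ⟨b1, b2, b3⟩ := rho_mem hx hxy hy
    have h := hsym x y hx hxy hy
    rw [hR x y hx hxy hy, hR _ _ b1 b2 b3, v_rho hx hxy hy, dl_rho L hx hxy hy] at h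
    unfold dl at h
    rw [show (y - x) / (1 - x) = 1 - (1 - y) / (1 - x) by field_simp; ring] at h
    simp only [hp]
    linarith
  have F : ∀ x a : ℝ, 0 < x → x < a → a < 1 → p ((a - x) / (1 - x)) + θ ((a - x) / (1 - x)) = p a + θ x := by
    intro x a hx hxa ha
    have h1x : 0 < 1 - x := by linarith
    have ha0 : 0 < a := by linarith
    have hxy : x < x / a := by rw [lt_div_iff₀ ha0]; nlinarith
    have hy : x / a < 1 := by rw [div_lt_one ha0]; exact hxa
    have e := E x (x / a) hx hxy hy
    obtain ⟨b1, b2, b3⟩ := rho_mem hx hxy hy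
    have f := E _ _ b1 b2 b3
    rw [v_rho hx hxy hy] at f
    have c1 : x / (x / a) = a := by field_simp
    have c2 : x * (1 - x / a) / (x / a * (1 - x)) = (a - x) / (1 - x) := by field_simp
    have c3 : (1 - x / a) / ((1 - x / a) / (1 - x)) = 1 - x := by
      rw [div_div_eq_mul_div, mul_div_assoc, mul_comm, div_mul_cancel₀ _ b1.ne']
    have c4 : (1 - (1 - x / a) / (1 - x)) / (1 - (1 - x / a)) = 1 - (a - x) / (1 - x) := by
      rw [show 1 - (1 - x / a) = x / a by ring]; field_simp; ring
    rw [c1, c2] at e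
    rw [c1, c3, c4, psym, psym, psym, show 1 - (1 - x) = x by ring] at f
    linarith
  -- derivative
  have dp : ∀ x a : ℝ, 0 < x → x < a → a < 1 → HasDerivAt p (-((1 - x) * deriv θ x / (1 - a))) a := by
    intro x a hx hxa ha
    have h1x : 0 < 1 - x := by linarith
    have h1a : 0 < 1 - a := by linarith
    set v := (a - x) / (1 - x) with hv
    have hv0 : 0 < v := div_pos (by linarith) h1x
    have hva : v < a := by rw [hv, div_lt_iff₀ h1x]; nlinarith
    have h1v : 0 < 1 - v := by linarith
    have e1 : (a - v) / (1 - v) = x := by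
      have : 1 - v = (1 - a) / (1 - x) := by rw [hv]; field_simp; ring
      rw [this, hv]; field_simp; ring
    have d1 : HasDerivAt (fun τ => (τ - v) / (1 - v)) (1 / (1 - v)) a :=
      ((hasDerivAt_id a).sub_const v).div_const (1 - v)
    have d2 : HasDerivAt (fun τ => θ ((τ - v) / (1 - v))) (deriv θ x * (1 / (1 - v))) a := by
      have := (hθ x ⟨hx, by linarith⟩).hasDerivAt
      rw [← e1] at this
      exact (e1 ▸ this.comp a d1)
    have d3 := d2.const_sub (p v + θ v)
    refine (d3.congr_of_eventuallyEq (f₁ := p) ?_).congr_deriv ?_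
    · filter_upwards [Ioo_mem_nhds hva ha] with τ hτ
      have l1 : 0 < τ - v := by linarith [hτ.1]
      have l2 : 0 < 1 - τ := by linarith [hτ.2]
      have := F ((τ - v) / (1 - v)) τ (by positivity) 
        (by rw [div_lt_iff₀ h1v]; nlinarith) hτ.2
      have e2 : (τ - (τ - v) / (1 - v)) / (1 - (τ - v) / (1 - v)) = v := by
        have : 1 - (τ - v) / (1 - v) = (1 - τ) / (1 - v) := by field_simp; ring
        rw [this]; field_simp; ring
      rw [e2] at this
      linarith
    · have : 1 - v = (1 - a) / (1 - x) := by rw [hv]; field_simp; ring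
      rw [this]; field_simp
  set k := (1 - 1/4) * deriv θ (1/4) with hk
  have hθk : ∀ x ∈ Ioo (0:ℝ) 1, (1 - x) * deriv θ x = k := by
    intro x hx
    set a := max ((1 + x) / 2) (1 / 2) with ha
    have a1 : x < a := lt_max_of_lt_left (by linarith [hx.2])
    have a2 : 1/4 < a := lt_max_of_lt_right (by norm_num)
    have a3 : a < 1 := max_lt (by linarith [hx.2]) (by norm_num)
    have := (dp x a hx.1 a1 a3).unique (dp (1/4) a (by norm_num) a2 a3)
    have h1a : 1 - a ≠ 0 := by linarith
    rw [neg_inj, div_left_inj' h1a] at this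
    exact this
  have hk0 : k = 0 := by
    have d := dp (1/4) (1/2) (by norm_num) (by norm_num) (by norm_num)
    have d' : HasDerivAt (fun x => p (1 - x)) (-(-((1 - 1/4) * deriv θ (1/4) / (1 - 1/2)))) (1/2) := by
      have := HasDerivAt.comp_const_sub (f := p) 1 (1/2) (f' := -((1 - 1/4) * deriv θ (1/4) / (1 - 1/2))) (by
        norm_num at d ⊢; exact d)
      exact this
    have e : (fun x => p (1 - x)) = p := funext psym
    rw [e] at d'
    have := d.unique d'
    rw [← hk] at this
    norm_num at this
    linarith
  refine ⟨p (1/2) / 2, θ (1/2), ?_, ?_⟩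
  · intro x hx
    have := const_of_deriv_zero isOpen_Ioo (convex_Ioo (0:ℝ) 1) (f := p) (fun a ha => by
      have := dp (a / 2) a (by linarith [ha.1]) (by linarith [ha.1]) ha.2
      rw [hθk (a / 2) ⟨by linarith [ha.1], by linarith [ha.1, ha.2]⟩, hk0] at this
      simpa using this) hx (show (1/2:ℝ) ∈ Ioo (0:ℝ) 1 by norm_num)
    rw [mul_div_cancel₀ _ two_ne_zero, ← this]
  · intro x hx
    refine const_of_deriv_zero isOpen_Ioo (convex_Ioo (0:ℝ) 1) (f := θ) (fun a ha => ?_) hx (show (1/2:ℝ) ∈ Ioo (0:ℝ) 1 by norm_num)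
    have h := hθk a ha
    rw [hk0] at h
    have h1 : 1 - a ≠ 0 := by linarith [ha.2]
    have h2 := (hθ a ha).hasDerivAt
    rwa [(mul_eq_zero.1 h).resolve_left h1] at h2

theorem bdd_of {R : ℝ × ℝ → ℝ} (hRbdd : ∃ M : ℝ, ∀ p ∈ P2, |R p| ≤ M) {L : ℝ → ℝ} {C : ℝ}
    (hL : ∀ x y : ℝ, 0 < x → x < y → y < 1 →
        L x - L y - L (x / y) - L ((y - 1) / (x - 1))
          + L (x * (y - 1) / (y * (x - 1))) = R (x, y))
    (hC : ∀ x ∈ Set.Ioo (0:ℝ) 1, L (1 - x) = C - L x)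
    (hb : ∃ B : ℝ, ∀ x ∈ Icc (1/2:ℝ) (3/4), |L x| ≤ B) :
    ∃ M : ℝ, ∀ x ∈ Set.Ioo (0:ℝ) 1, |L x| ≤ M := by
  obtain ⟨M, hM⟩ := hRbdd
  obtain ⟨B, hB⟩ := hb
  have B0 : 0 ≤ B := (abs_nonneg _).trans (hB (1/2) (by norm_num))
  have M0 : 0 ≤ M := (abs_nonneg _).trans (hM (1/4, 1/2) (by norm_num [P2]))
  have step : ∀ x, 0 < x → x < 1/2 → 2 * L x = L (x * (2 - x)) + 2 * L (1 / (2 - x)) + R (x, 1 / (2 - x)) := by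
    intro x hx hx1
    have h2 : 0 < 2 - x := by linarith
    have h1x : 0 < 1 - x := by linarith
    have h := hL x (1 / (2 - x)) hx (by rw [lt_div_iff₀ h2]; nlinarith) (by rw [div_lt_one h2]; linarith)
    have n1 : 1 / (2 - x) - 1 = - ((1 - x) / (2 - x)) := by field_simp; ring
    rw [n1, show x - 1 = - (1 - x) by ring, neg_div_neg_eq, mul_neg, mul_neg, neg_div_neg_eq] at h
    rw [show (1 - x) / (2 - x) / (1 - x) = 1 / (2 - x) by field_simp,
      show x * ((1 - x) / (2 - x)) / (1 / (2 - x) * (1 - x)) = x by field_simp,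
      show x / (1 / (2 - x)) = x * (2 - x) by field_simp] at h
    linarith
  have P : ∀ n : ℕ, ∀ x, (2/3:ℝ) ^ n / 2 ≤ x → x ≤ 3/4 → |L x| ≤ 2 * B + M := by
    intro n
    induction n with
    | zero => 
      intro x h1 h2
      have := hB x ⟨by simpa using h1, h2⟩
      linarith
    | succ n ih =>
      intro x h1 h2
      have pp : (0:ℝ) < (2/3) ^ n := by positivity
      rw [pow_succ] at h1
      by_cases hx : 1/2 ≤ x
      · have := hB x ⟨hx, h2⟩
        linarith
      · push Not at hx
        have hx0 : 0 < x := by nlinarith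
        have h2x : 0 < 2 - x := by linarith
        have s := step x hx0 hx
        have a := ih (x * (2 - x)) (by nlinarith) (by nlinarith)
        have b := hB (1 / (2 - x)) ⟨by rw [div_le_div_iff₀ (by norm_num) h2x]; linarith, 
          by rw [div_le_div_iff₀ h2x (by norm_num)]; linarith⟩
        have c := hM (x, 1 / (2 - x)) ⟨hx0, by simp only; rw [lt_div_iff₀ h2x]; nlinarith, by 
          simp only; rw [div_lt_one h2x]; linarith⟩
        rw [abs_le] at *
        constructor <;> linarith [a.1, a.2, b.1, b.2, c.1, c.2]
  have Q : ∀ x, 0 < x → x ≤ 3/4 → |L x| ≤ 2 * B + M := by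
    intro x hx hx1
    obtain ⟨n, hn⟩ := exists_pow_lt_of_lt_one hx (show (2/3:ℝ) < 1 by norm_num)
    have pp : (0:ℝ) < (2/3) ^ n := by positivity
    exact P n x (by linarith) hx1
  refine ⟨2 * B + M + |C|, fun x hx => ?_⟩
  by_cases h : x ≤ 3/4
  · have := Q x hx.1 h
    have := abs_nonneg C
    linarith
  · push Not at h
    have := Q (1 - x) (by linarith [hx.2]) (by linarith)
    have e := hC x hx
    have : L x = C - L (1 - x) := by linarith
    rw [this]
    calc |C - L (1 - x)| ≤ |C| + |L (1 - x)| := abs_sub _ _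
      _ ≤ _ := by linarith

theorem assemble (R : ℝ × ℝ → ℝ)
    (hRbdd : ∃ M : ℝ, ∀ p ∈ P2, |R p| ≤ M)
    (h6 : H6 R)
    (hsym : ∀ x y : ℝ, 0 < x → x < y → y < 1 →
      R (1 - y, (1 - y) / (1 - x)) = R (x, y))
    (hst : ∃ L : ℝ → ℝ, AEMeasurable L (volume.restrict (Ioo (0:ℝ) 1)) ∧
      (∃ M : ℝ, ∀ x ∈ Ioo (0:ℝ) 1, |L x| ≤ M) ∧
      ContDiffOn ℝ 2 (fun p : ℝ × ℝ => R p - dl L p.1 p.2) P2)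
    (C : ℝ) :
    ∃ L : ℝ → ℝ, AEMeasurable L (volume.restrict (Set.Ioo (0:ℝ) 1)) ∧
      (∃ M : ℝ, ∀ x ∈ Set.Ioo (0:ℝ) 1, |L x| ≤ M) ∧
      (∀ x y : ℝ, 0 < x → x < y → y < 1 →
        L x - L y - L (x / y) - L ((y - 1) / (x - 1))
          + L (x * (y - 1) / (y * (x - 1))) = R (x, y)) ∧
      (∀ x ∈ Set.Ioo (0:ℝ) 1, L (1 - x) = C - L x) := by
  obtain ⟨L1, m1, ⟨M1, b1⟩, c1⟩ := hst
  obtain ⟨L2, θ, d2, dθ, h2⟩ := stage2 _ c1 (H6_sub h6 (H6_dl L1))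
  obtain ⟨k, t, hk, ht⟩ := sym_const (R := R) hsym (L := fun x => L1 x + L2 x) dθ (by
    intro x y hx hxy hy
    have := h2 x y hx hxy hy
    simp only [dl] at this ⊢
    linarith)
  obtain ⟨L0, d0, a0, K, hK, h0⟩ := dilog
  set lam := (k + t + C / 2) / K with hlam
  set L : ℝ → ℝ := fun x => L1 x + L2 x - k + lam * L0 x + C / 2 with hL
  have hC : ∀ x ∈ Set.Ioo (0:ℝ) 1, L (1 - x) = C - L x := by
    intro x hx
    have e1 := hk x hx
    have e2 := a0 x hx
    simp only [hL, e2]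
    linarith
  have hE : ∀ x y : ℝ, 0 < x → x < y → y < 1 →
        L x - L y - L (x / y) - L ((y - 1) / (x - 1))
          + L (x * (y - 1) / (y * (x - 1))) = R (x, y) := by
    intro x y hx hxy hy
    have h1x : 0 < 1 - x := by linarith
    have h1y : 0 < 1 - y := by linarith
    have hy0 : 0 < y := by linarith
    have n1 : (y - 1) / (x - 1) = 1 - (y - x) / (1 - x) := by
      rw [← neg_sub 1 y, ← neg_sub 1 x, neg_div_neg_eq]; field_simp; ring
    have n2 : x * (y - 1) / (y * (x - 1)) = x * (1 - y) / (y * (1 - x)) := by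
      rw [← neg_sub 1 y, ← neg_sub 1 x, mul_neg, mul_neg, neg_div_neg_eq]
    have e3 := hC ((y - x) / (1 - x)) ⟨div_pos (by linarith) h1x, by rw [div_lt_one h1x]; linarith⟩
    rw [n1, n2, e3]
    have e1 := h2 x y hx hxy hy
    have e2 := h0 x y hx hxy hy
    rw [ht _ ⟨by positivity, by rw [div_lt_one (by positivity)]; nlinarith⟩] at e1
    have e4 : lam * K = k + t + C / 2 := by rw [hlam]; field_simp
    rw [← e2] at e4
    simp only [hL]
    simp only [dl] at e1 e4
    linarith
  have cL2 : ContinuousOn L2 (Ioo 0 1) := fun x hx => (d2 x hx).continuousAt.continuousWithinAt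
  have cL0 : ContinuousOn L0 (Ioo 0 1) := fun x hx => (d0 x hx).continuousAt.continuousWithinAt
  refine ⟨L, ?_, bdd_of hRbdd hE hC ?_, hE, hC⟩
  · exact (((m1.add (cL2.aemeasurable measurableSet_Ioo)).sub_const k).add 
      ((cL0.aemeasurable measurableSet_Ioo).const_mul lam)).add_const (C / 2)
  · have hsub : Icc (1/2:ℝ) (3/4) ⊆ Ioo 0 1 := fun x hx => ⟨by linarith [hx.1], by linarith [hx.2]⟩
    have : ContinuousOn (fun x => L2 x - k + lam * L0 x + C / 2) (Icc (1/2:ℝ) (3/4)) :=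
      (((cL2.mono hsub).sub continuousOn_const).add (continuousOn_const.mul (cL0.mono hsub))).add continuousOn_const
    obtain ⟨B, hB⟩ := isCompact_Icc.exists_bound_of_continuousOn this
    refine ⟨M1 + B, fun x hx => ?_⟩
    have e1 := b1 x (hsub hx)
    have e2 := hB x hx
    rw [Real.norm_eq_abs] at e2
    have : L x = L1 x + (L2 x - k + lam * L0 x + C / 2) := by simp only [hL]; ring
    rw [this]
    exact (abs_add_le _ _).trans (add_le_add e1 e2)

noncomputable def kr (p : ℝ → ℝ) (u v w z α : ℝ) : ℝ :=
  p ((u * α + v) / (w * α + z)) * (|u * z - v * w| / (w * α + z) ^ 2)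

theorem mob_inv {u v w z x : ℝ} (hD : u * z - v * w ≠ 0) (hx : w * x + z ≠ 0) :
    u - w * ((u * x + v) / (w * x + z)) = (u * z - v * w) / (w * x + z) ∧
    (z * ((u * x + v) / (w * x + z)) - v) / (u - w * ((u * x + v) / (w * x + z))) = x := by
  have e1 : u - w * ((u * x + v) / (w * x + z)) = (u * z - v * w) / (w * x + z) := by
    field_simp; ring
  have e2 : z * ((u * x + v) / (w * x + z)) - v = x * ((u * z - v * w) / (w * x + z)) := by
    rw [mul_div_assoc', mul_div_assoc', div_sub' hx]; congr 1; ring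
  refine ⟨e1, ?_⟩
  rw [e1, e2, mul_div_assoc, div_self (div_ne_zero hD hx), mul_one]

theorem mob_inv2 {u v w z t : ℝ} (hD : u * z - v * w ≠ 0) (ht : u - w * t ≠ 0) :
    w * ((z * t - v) / (u - w * t)) + z = (u * z - v * w) / (u - w * t) ∧
    (u * ((z * t - v) / (u - w * t)) + v) / (w * ((z * t - v) / (u - w * t)) + z) = t := by
  have e1 : w * ((z * t - v) / (u - w * t)) + z = (u * z - v * w) / (u - w * t) := by
    field_simp; ring
  have e2 : u * ((z * t - v) / (u - w * t)) + v = t * ((u * z - v * w) / (u - w * t)) := by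
    rw [mul_div_assoc', mul_div_assoc', div_add' _ _ _ ht]; congr 1; ring
  refine ⟨e1, ?_⟩
  rw [e1, e2, mul_div_assoc, div_self (div_ne_zero hD ht), mul_one]

theorem null_lin {w z : ℝ} (h : w ≠ 0 ∨ z ≠ 0) : volume {α : ℝ | w * α + z ≠ 0}ᶜ = 0 := by
  apply Set.Subsingleton.measure_zero
  intro a ha b hb
  simp only [mem_compl_iff, mem_ofPred_eq, not_not] at ha hb
  by_cases hw : w = 0
  · subst hw
    simp at ha h; exact absurd ha h
  · have : w * (a - b) = 0 := by linarith
    rcases mul_eq_zero.1 this with h | h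
    · exact absurd h hw
    · linarith

theorem mob_cov (F p : ℝ → ℝ) {u v w z : ℝ} (hD : u * z - v * w ≠ 0) :
    ∫ t, p t * F ((z * t - v) / (u - w * t)) = ∫ α, F α * kr p u v w z α := by
  set s : Set ℝ := {α : ℝ | w * α + z ≠ 0} with hs
  set f : ℝ → ℝ := fun α => (u * α + v) / (w * α + z) with hf
  have hsm : MeasurableSet s := by
    have : IsOpen s := isOpen_ne_fun (by fun_prop) (by fun_prop)
    exact this.measurableSet
  have hder : ∀ x ∈ s, HasDerivWithinAt f ((u * z - v * w) / (w * x + z) ^ 2) s x := by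
    intro x hx
    have h1 : HasDerivAt (fun α => u * α + v) u x := by
      simpa using ((hasDerivAt_id x).const_mul u).add_const v
    have h2 : HasDerivAt (fun α => w * α + z) w x := by
      simpa using ((hasDerivAt_id x).const_mul w).add_const z
    have h3 := h1.div h2 hx
    refine (h3.congr_deriv ?_).hasDerivWithinAt
    congr 1; ring
  have hinv : ∀ x ∈ s, u - w * f x = (u * z - v * w) / (w * x + z) ∧ (z * f x - v) / (u - w * f x) = x := by
    exact fun x hx => mob_inv hD hx
  have hinj : InjOn f s := by
    intro x hx y hy hxy
    rw [← (hinv x hx).2, ← (hinv y hy).2, hxy]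
  have him : f '' s = {t : ℝ | -w * t + u ≠ 0} := by
    ext t
    constructor
    · rintro ⟨x, hx, rfl⟩
      have := (hinv x hx).1
      have h3 : (u * z - v * w) / (w * x + z) ≠ 0 := div_ne_zero hD hx
      rw [← this] at h3
      intro h; apply h3; linarith
    · intro ht
      have ht' : u - w * t ≠ 0 := by intro h; apply ht; show -w * t + u = 0; linarith
      have e := mob_inv2 hD ht'
      refine ⟨(z * t - v) / (u - w * t), ?_, e.2⟩
      show _ ≠ _
      rw [e.1]; exact div_ne_zero hD ht'
  have key := integral_image_eq_integral_abs_deriv_smul hsm hder hinj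
    (fun t => p t * F ((z * t - v) / (u - w * t)))
  have hwz : w ≠ 0 ∨ z ≠ 0 := by
    by_contra! h; apply hD; rw [h.1, h.2]; ring
  have hwu : -w ≠ 0 ∨ u ≠ 0 := by
    by_contra! h; apply hD; rw [neg_eq_zero.1 h.1, h.2]; ring
  rw [him, Measure.restrict_eq_self_of_ae_mem (compl_compl {t : ℝ | -w * t + u ≠ 0} ▸ (measure_eq_zero_iff_ae_notMem.1 (null_lin hwu)) |>.mono fun x hx => by simpa using hx),
    Measure.restrict_eq_self_of_ae_mem ((measure_eq_zero_iff_ae_notMem.1 (null_lin hwz)).mono fun x hx => by simpa [hs] using hx)] at key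
  rw [key]
  apply integral_congr_ae
  filter_upwards [measure_eq_zero_iff_ae_notMem.1 (null_lin hwz)] with x hx
  have hx : x ∈ s := by simpa [hs] using hx
  rw [(hinv x hx).2, kr, abs_div, abs_pow, sq_abs, smul_eq_mul]
  simp only [hf]; ring

theorem kr_contDiffAt {P : Type*} [NormedAddCommGroup P] [NormedSpace ℝ P] {u v w z : P → ℝ}
    {p : ℝ → ℝ} (hp : ContDiff ℝ 2 p) (hp3 : ∀ t, 3 ≤ |t| → p t = 0) {θ : P} (α : ℝ)
    (hu : ContDiffAt ℝ 2 u θ) (hv : ContDiffAt ℝ 2 v θ) (hw : ContDiffAt ℝ 2 w θ) (hz : ContDiffAt ℝ 2 z θ)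
    (hD : u θ * z θ - v θ * w θ ≠ 0) :
    ContDiffAt ℝ 2 (fun x : P × ℝ => kr p (u x.1) (v x.1) (w x.1) (z x.1) x.2) (θ, α) := by
  have f1 : ContDiffAt ℝ 2 (fun x : P × ℝ => x.1) (θ, α) := contDiffAt_fst
  have f2 : ContDiffAt ℝ 2 (fun x : P × ℝ => x.2) (θ, α) := contDiffAt_snd
  have hu' : ContDiffAt ℝ 2 (fun x : P × ℝ => u x.1) (θ, α) := ContDiffAt.comp (θ, α) hu f1
  have hv' : ContDiffAt ℝ 2 (fun x : P × ℝ => v x.1) (θ, α) := ContDiffAt.comp (θ, α) hv f1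
  have hw' : ContDiffAt ℝ 2 (fun x : P × ℝ => w x.1) (θ, α) := ContDiffAt.comp (θ, α) hw f1
  have hz' : ContDiffAt ℝ 2 (fun x : P × ℝ => z x.1) (θ, α) := ContDiffAt.comp (θ, α) hz f1
  have hN : ContDiffAt ℝ 2 (fun x : P × ℝ => u x.1 * x.2 + v x.1) (θ, α) := (hu'.mul f2).add hv'
  have hDn : ContDiffAt ℝ 2 (fun x : P × ℝ => w x.1 * x.2 + z x.1) (θ, α) := (hw'.mul f2).add hz'
  by_cases h0 : w θ * α + z θ = 0
  · have hN0 : u θ * α + v θ ≠ 0 := by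
      intro h
      apply hD
      by_cases hwz : w θ = 0
      · have : z θ = 0 := by rw [hwz] at h0; linarith
        rw [hwz, this]; ring
      · have h1 : z θ = -(w θ * α) := by linarith
        have h2 : v θ = -(u θ * α) := by linarith
        rw [h1, h2]; ring
    have ev : ∀ᶠ x in nhds ((θ, α) : P × ℝ), 3 * |w x.1 * x.2 + z x.1| < |u x.1 * x.2 + v x.1| := by
      have c1 := (hDn.continuousAt.abs.const_mul 3)
      have c2 := hN.continuousAt.abs
      exact c1.eventually_lt c2 (by simp [h0]; exact hN0)
    apply (contDiffAt_const (c := (0:ℝ))).congr_of_eventuallyEq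
    filter_upwards [ev] with x hx
    rw [kr]
    by_cases hd : w x.1 * x.2 + z x.1 = 0
    · rw [hd]; simp
    · rw [hp3, zero_mul]
      rw [abs_div, le_div_iff₀ (abs_pos.2 hd)]
      exact hx.le
  · have q1 : ContDiffAt ℝ 2 (fun x : P × ℝ => (u x.1 * x.2 + v x.1) / (w x.1 * x.2 + z x.1)) (θ, α) := hN.div hDn h0
    have q2 : ContDiffAt ℝ 2 (fun x : P × ℝ => p ((u x.1 * x.2 + v x.1) / (w x.1 * x.2 + z x.1))) (θ, α) :=
      hp.contDiffAt.comp (θ, α) q1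
    have q3 : ContDiffAt ℝ 2 (fun x : P × ℝ => |u x.1 * z x.1 - v x.1 * w x.1|) (θ, α) :=
      ContDiffAt.comp (θ, α) (g := fun t : ℝ => |t|) (contDiffAt_abs hD) ((hu'.mul hz').sub (hv'.mul hw'))
    exact q2.mul (q3.div (hDn.pow 2) (pow_ne_zero 2 h0))

theorem kr_supp {P : Type*} [NormedAddCommGroup P] [NormedSpace ℝ P] [LocallyCompactSpace P] {u v w z : P → ℝ}
    {p : ℝ → ℝ} (hpc : HasCompactSupport p) {Ω : Set P} (hΩ : IsOpen Ω)
    (hu : ContinuousOn u Ω) (hv : ContinuousOn v Ω) (hw : ContinuousOn w Ω) (hz : ContinuousOn z Ω)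
    (hD : ∀ θ ∈ Ω, u θ * z θ - v θ * w θ ≠ 0)
    (hd : ∀ θ ∈ Ω, ∀ t ∈ tsupport p, u θ - w θ * t ≠ 0) {θ₀ : P} (h0 : θ₀ ∈ Ω) :
    ∃ V ∈ nhds θ₀, V ⊆ Ω ∧ ∃ K : Set ℝ, IsCompact K ∧ ∀ θ ∈ V, ∀ α, α ∉ K → 
      kr p (u θ) (v θ) (w θ) (z θ) α = 0 := by
  obtain ⟨V, hV, hVΩ, hVc⟩ := local_compact_nhds (hΩ.mem_nhds h0)
  refine ⟨V, hV, hVΩ, (fun x : P × ℝ => (z x.1 * x.2 - v x.1) / (u x.1 - w x.1 * x.2)) '' (V ×ˢ tsupport p), ?_, ?_⟩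
  · apply (hVc.prod hpc).image_of_continuousOn
    have m : MapsTo (Prod.fst : P × ℝ → P) (V ×ˢ tsupport p) Ω := fun x hx => hVΩ hx.1
    have c1 : ContinuousOn (fun x : P × ℝ => x.1) (V ×ˢ tsupport p) := continuousOn_fst
    have c2 : ContinuousOn (fun x : P × ℝ => x.2) (V ×ˢ tsupport p) := continuousOn_snd
    exact (((hz.comp c1 m).mul c2).sub (hv.comp c1 m)).div ((hu.comp c1 m).sub ((hw.comp c1 m).mul c2))
      (fun x hx => hd _ (hVΩ hx.1) _ hx.2)
  · intro θ hθ α hα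
    by_contra hne
    apply hα
    rw [kr] at hne
    have hx' : w θ * α + z θ ≠ 0 := by
      intro h; rw [h] at hne; simp at hne
    have ht : (u θ * α + v θ) / (w θ * α + z θ) ∈ tsupport p := 
      subset_tsupport _ (left_ne_zero_of_mul hne)
    refine ⟨(θ, _), ⟨hθ, ht⟩, ?_⟩
    have hD' := hD θ (hVΩ hθ)
    exact (mob_inv hD' hx').2

theorem smooth_pair {P : Type*} [NormedAddCommGroup P] [NormedSpace ℝ P] [LocallyCompactSpace P]
    {p q : ℝ → ℝ} (hp : ContDiff ℝ 2 p) (hp3 : ∀ t, 3 ≤ |t| → p t = 0) (hpc : HasCompactSupport p)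
    (hq : ContDiff ℝ 2 q) (hq3 : ∀ t, 3 ≤ |t| → q t = 0) (hqc : HasCompactSupport q)
    {Q : ℝ × ℝ → ℝ} (hQ : AEStronglyMeasurable Q volume) {B : ℝ} (hB : ∀ x, |Q x| ≤ B)
    {Ω : Set P} (hΩ : IsOpen Ω) {u v w z u' v' w' z' : P → ℝ}
    (hu : ContDiff ℝ 2 u) (hv : ContDiff ℝ 2 v) (hw : ContDiff ℝ 2 w) (hz : ContDiff ℝ 2 z)
    (hu' : ContDiff ℝ 2 u') (hv' : ContDiff ℝ 2 v') (hw' : ContDiff ℝ 2 w') (hz' : ContDiff ℝ 2 z')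
    (hD : ∀ θ ∈ Ω, u θ * z θ - v θ * w θ ≠ 0)
    (hd : ∀ θ ∈ Ω, ∀ t ∈ tsupport p, u θ - w θ * t ≠ 0)
    (hD' : ∀ θ ∈ Ω, u' θ * z' θ - v' θ * w' θ ≠ 0)
    (hd' : ∀ θ ∈ Ω, ∀ t ∈ tsupport q, u' θ - w' θ * t ≠ 0) :
    ContDiffOn ℝ 2 (fun θ => ∫ s, p s * ∫ y, q y * Q ((z θ * s - v θ) / (u θ - w θ * s),
      (z' θ * y - v' θ) / (u' θ - w' θ * y))) Ω := by
  intro θ₀ h0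
  apply ContDiffAt.contDiffWithinAt
  obtain ⟨V, hV, hVΩ, K, hK, hKz⟩ := kr_supp hpc hΩ hu.continuous.continuousOn hv.continuous.continuousOn
    hw.continuous.continuousOn hz.continuous.continuousOn hD hd h0
  obtain ⟨V', hV', hVΩ', K', hK', hKz'⟩ := kr_supp hqc hΩ hu'.continuous.continuousOn hv'.continuous.continuousOn
    hw'.continuous.continuousOn hz'.continuous.continuousOn hD' hd' h0
  set k : P → ℝ → ℝ := fun θ α => kr p (u θ) (v θ) (w θ) (z θ) α with hk
  set k' : P → ℝ → ℝ := fun θ α => kr q (u' θ) (v' θ) (w' θ) (z' θ) α with hk'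
  have ck : ∀ θ ∈ Ω, ∀ α, ContDiffAt ℝ 2 (fun x : P × ℝ => k x.1 x.2) (θ, α) := fun θ hθ α =>
    kr_contDiffAt hp hp3 α hu.contDiffAt hv.contDiffAt hw.contDiffAt hz.contDiffAt (hD θ hθ)
  have ck' : ∀ θ ∈ Ω, ∀ α, ContDiffAt ℝ 2 (fun x : P × ℝ => k' x.1 x.2) (θ, α) := fun θ hθ α =>
    kr_contDiffAt hq hq3 α hu'.contDiffAt hv'.contDiffAt hw'.contDiffAt hz'.contDiffAt (hD' θ hθ)
  have cont : ∀ θ ∈ Ω, Continuous (k θ) := by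
    intro θ hθ
    rw [continuous_iff_continuousAt]
    intro α
    exact ContinuousAt.comp (f := fun a : ℝ => (θ, a)) (ck θ hθ α).continuousAt (by fun_prop)
  have cont' : ∀ θ ∈ Ω, Continuous (k' θ) := by
    intro θ hθ
    rw [continuous_iff_continuousAt]
    intro α
    exact ContinuousAt.comp (f := fun a : ℝ => (θ, a)) (ck' θ hθ α).continuousAt (by fun_prop)
  obtain ⟨W, hWs, hWo, hW0⟩ := mem_nhds_iff.1 (Filter.inter_mem hV hV')
  have hWΩ : W ⊆ Ω := fun x hx => hVΩ (hWs hx).1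
  set g : P → ℝ × ℝ → ℝ := fun θ x => k θ (-x.1) * k' θ (-x.2) with hg
  have hgc : ContDiffOn ℝ 2 (fun x : P × (ℝ × ℝ) => g x.1 x.2) (W ×ˢ univ) := by
    intro x hx
    apply ContDiffAt.contDiffWithinAt
    have e1 : ContDiffAt ℝ 2 (fun x : P × (ℝ × ℝ) => k x.1 (-x.2.1)) x :=
      ContDiffAt.comp x (g := fun x : P × ℝ => k x.1 x.2) (f := fun x : P × (ℝ × ℝ) => (x.1, -x.2.1))
       (ck x.1 (hWΩ hx.1) _) (by fun_prop)
    have e2 : ContDiffAt ℝ 2 (fun x : P × (ℝ × ℝ) => k' x.1 (-x.2.2)) x :=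
      ContDiffAt.comp x (g := fun x : P × ℝ => k' x.1 x.2) (f := fun x : P × (ℝ × ℝ) => (x.1, -x.2.2))
       (ck' x.1 (hWΩ hx.1) _) (by fun_prop)
    exact e1.mul e2
  have hB0 : LocallyIntegrable Q volume := by
    rw [locallyIntegrable_iff]
    intro S hS
    refine Measure.integrableOn_of_bounded (M := B) hS.measure_lt_top.ne hQ ?_
    exact Filter.Eventually.of_forall fun x => hB x
  have hc := contDiffOn_convolution_right_with_param (n := 2) (μ := (volume : Measure (ℝ × ℝ))) (f := Q)
    (ContinuousLinearMap.mul ℝ ℝ)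
    (g := g) hWo (hK.neg.prod hK'.neg) (by
      intro θ x hθ hx
      simp only [hg]
      by_cases h1 : x.1 ∈ -K
      · have h2 : x.2 ∉ -K' := fun h => hx ⟨h1, h⟩
        rw [show k' θ (-x.2) = 0 from hKz' θ (hWs hθ).2 _ (by simpa using h2), mul_zero]
      · rw [show k θ (-x.1) = 0 from hKz θ (hWs hθ).1 _ (by simpa using h1), zero_mul]) hB0 hgc
  have hc2 : ContDiffAt ℝ 2 (fun x : P × (ℝ × ℝ) => (convolution Q (g x.1) (ContinuousLinearMap.mul ℝ ℝ) volume) x.2) (θ₀, 0) :=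
    (hc (θ₀, 0) ⟨hW0, mem_univ _⟩).contDiffAt ((hWo.prod isOpen_univ).mem_nhds ⟨hW0, mem_univ _⟩)
  have hc3 : ContDiffAt ℝ 2 (fun θ : P => (convolution Q (g θ) (ContinuousLinearMap.mul ℝ ℝ) volume) 0) θ₀ :=
    ContDiffAt.comp θ₀ (f := fun θ : P => (θ, (0 : ℝ × ℝ))) hc2 (by fun_prop)
  refine hc3.congr_of_eventuallyEq ?_
  filter_upwards [hWo.mem_nhds hW0] with θ hθ
  have hθΩ := hWΩ hθ
  have hs1 : HasCompactSupport (k θ) := HasCompactSupport.intro hK (fun x hx => hKz θ (hWs hθ).1 x hx)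
  have hs2 : HasCompactSupport (k' θ) := HasCompactSupport.intro hK' (fun x hx => hKz' θ (hWs hθ).2 x hx)
  have i1 : Integrable (k θ) := (cont θ hθΩ).integrable_of_hasCompactSupport hs1
  have i2 : Integrable (k' θ) := (cont' θ hθΩ).integrable_of_hasCompactSupport hs2
  have i3 : Integrable (fun x : ℝ × ℝ => Q x * (k θ x.1 * k' θ x.2)) := by
    have i4 : Integrable (fun x : ℝ × ℝ => k θ x.1 * k' θ x.2) := i1.mul_prod i2
    exact i4.bdd_mul hQ (Filter.Eventually.of_forall hB)
  calc ∫ s, p s * ∫ y, q y * Q ((z θ * s - v θ) / (u θ - w θ * s), (z' θ * y - v' θ) / (u' θ - w' θ * y))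
      = ∫ s, p s * (fun a => ∫ β, Q (a, β) * k' θ β) ((z θ * s - v θ) / (u θ - w θ * s)) := by
        congr 1; ext s; congr 1
        exact mob_cov (fun β => Q ((z θ * s - v θ) / (u θ - w θ * s), β)) q (hD' θ hθΩ)
    _ = ∫ a, (∫ β, Q (a, β) * k' θ β) * k θ a := mob_cov (fun a => ∫ β, Q (a, β) * k' θ β) p (hD θ hθΩ)
    _ = ∫ a, ∫ β, Q (a, β) * (k θ a * k' θ β) := by
        congr 1; ext a; rw [← integral_mul_const]; congr 1; ext b; ring
    _ = ∫ x : ℝ × ℝ, Q x * (k θ x.1 * k' θ x.2) := by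
        rw [Measure.volume_eq_prod] at i3 ⊢
        rw [integral_prod _ i3]
    _ = convolution Q (g θ) (ContinuousLinearMap.mul ℝ ℝ) volume 0 := by
        rw [convolution]
        congr 1; ext x; simp [hg]

theorem qmp {E : Type*} [NormedAddCommGroup E] [NormedSpace ℝ E] [FiniteDimensional ℝ E]
    [MeasurableSpace E] [BorelSpace E] (μ : Measure E) [μ.IsAddHaarMeasure] {Ψ Φ : E → E} {U V : Set E}
    (hΨ : Measurable Ψ) (hm : MapsTo Ψ U V) (hΦ : DifferentiableOn ℝ Φ V)
    (hinv : ∀ u ∈ U, Φ (Ψ u) = u) :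
    Measure.QuasiMeasurePreserving Ψ (μ.restrict U) (μ.restrict V) := by
  refine ⟨hΨ, ?_⟩
  refine Measure.AbsolutelyContinuous.mk fun s hs h => ?_
  rw [Measure.restrict_apply hs] at h
  rw [Measure.map_apply hΨ hs, Measure.restrict_apply (hΨ hs)]
  have h2 := addHaar_image_eq_zero_of_differentiableOn_of_addHaar_eq_zero μ (hΦ.mono (inter_subset_right (s := s))) h
  refine measure_mono_null ?_ h2
  rintro x ⟨hx1, hx2⟩
  exact ⟨Ψ x, ⟨hx1, hm hx2⟩, hinv x hx2⟩

noncomputable def c5 (R : ℝ × ℝ → ℝ) (x0 x1 x2 x3 x4 : ℝ) : ℝ :=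
  R ((x1 - x0) * (x4 - x3) / ((x4 - x1) * (x3 - x0)), (x2 - x0) * (x4 - x3) / ((x4 - x2) * (x3 - x0)))

theorem c5_six {R : ℝ × ℝ → ℝ} (h : H6 R) {y0 y1 y2 y3 y4 y5 : ℝ} (h0 : y0 < y1) (h1 : y1 < y2)
    (h2 : y2 < y3) (h3 : y3 < y4) (h4 : y4 < y5) :
    c5 R y1 y2 y3 y4 y5 - c5 R y0 y2 y3 y4 y5 + c5 R y0 y1 y3 y4 y5 - c5 R y0 y1 y2 y4 y5
      + c5 R y0 y1 y2 y3 y5 - c5 R y0 y1 y2 y3 y4 = 0 := by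
  have d10 : 0 < y1 - y0 := by linarith
  have d20 : 0 < y2 - y0 := by linarith
  have d30 : 0 < y3 - y0 := by linarith
  have d40 : 0 < y4 - y0 := by linarith
  have d50 : 0 < y5 - y0 := by linarith
  have d21 : 0 < y2 - y1 := by linarith
  have d31 : 0 < y3 - y1 := by linarith
  have d41 : 0 < y4 - y1 := by linarith
  have d51 : 0 < y5 - y1 := by linarith
  have d32 : 0 < y3 - y2 := by linarith
  have d42 : 0 < y4 - y2 := by linarith
  have d52 : 0 < y5 - y2 := by linarith
  have d43 : 0 < y4 - y3 := by linarith
  have d53 : 0 < y5 - y3 := by linarith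
  have d54 : 0 < y5 - y4 := by linarith
  have lt : ∀ s t : ℝ, y0 < s → s < t → t < y5 →
      (s - y0) * (y5 - y4) / ((y5 - s) * (y4 - y0)) < (t - y0) * (y5 - y4) / ((y5 - t) * (y4 - y0)) := by
    intro s t hs hst ht
    have e1 : 0 < y5 - s := by linarith
    have e2 : 0 < y5 - t := by linarith
    rw [div_lt_div_iff₀ (by positivity) (by positivity)]
    have : (t - y0) * (y5 - y4) * ((y5 - s) * (y4 - y0)) - (s - y0) * (y5 - y4) * ((y5 - t) * (y4 - y0))
      = (y5 - y4) * (y4 - y0) * ((t - s) * (y5 - y0)) := by ring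
    have e3 : 0 < t - s := by linarith
    have : 0 < (y5 - y4) * (y4 - y0) * ((t - s) * (y5 - y0)) := by positivity
    linarith
  have key := h ((y1 - y0) * (y5 - y4) / ((y5 - y1) * (y4 - y0))) ((y2 - y0) * (y5 - y4) / ((y5 - y2) * (y4 - y0)))
    ((y3 - y0) * (y5 - y4) / ((y5 - y3) * (y4 - y0))) (by positivity) (lt _ _ h0 h1 (by linarith))
    (lt _ _ (by linarith) h2 (by linarith)) (by
      have := lt y3 y4 (by linarith) h3 h4
      rw [mul_comm (y4 - y0), div_self (by positivity)] at this
      exact this)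
  have sub1 : ∀ s : ℝ, 0 < y5 - s → 1 - (s - y0) * (y5 - y4) / ((y5 - s) * (y4 - y0)) = (y4 - s) * (y5 - y0) / ((y5 - s) * (y4 - y0)) := by
    intro s hs; field_simp; ring
  have sub2 : ∀ s t : ℝ, 0 < y5 - s → 0 < y5 - t → (t - y0) * (y5 - y4) / ((y5 - t) * (y4 - y0)) - (s - y0) * (y5 - y4) / ((y5 - s) * (y4 - y0)) = (t - s) * (y5 - y0) * (y5 - y4) / ((y5 - s) * (y5 - t) * (y4 - y0)) := by
    intro s t hs ht; field_simp; ring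
  simp only [sub1 y1 d51, sub1 y2 d52, sub1 y3 d53, sub2 y1 y2 d51 d52, sub2 y1 y3 d51 d53] at key
  have ez : ∀ s : ℝ, 0 < y5 - s → (s - y0) * (y5 - y4) / ((y5 - s) * (y4 - y0)) / ((y3 - y0) * (y5 - y4) / ((y5 - y3) * (y4 - y0)))
      = (s - y0) * (y5 - y3) / ((y5 - s) * (y3 - y0)) := by
    intro s hs; field_simp
  have e0 : ∀ s : ℝ, 0 < y5 - s → (s - y1) * (y5 - y0) * (y5 - y4) / ((y5 - y1) * (y5 - s) * (y4 - y0)) / ((y4 - y1) * (y5 - y0) / ((y5 - y1) * (y4 - y0)))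
      = (s - y1) * (y5 - y4) / ((y5 - s) * (y4 - y1)) := by
    intro s hs; field_simp
  have e5 : ∀ s : ℝ, 0 < y5 - s → 0 < y4 - s → (s - y0) * (y5 - y4) / ((y5 - s) * (y4 - y0)) * ((y4 - y3) * (y5 - y0) / ((y5 - y3) * (y4 - y0))) / ((y3 - y0) * (y5 - y4) / ((y5 - y3) * (y4 - y0)) * ((y4 - s) * (y5 - y0) / ((y5 - s) * (y4 - y0))))
      = (s - y0) * (y4 - y3) / ((y4 - s) * (y3 - y0)) := by
    intro s hs hs'; field_simp
  rw [ez y1 d51, ez y2 d52, e0 y2 d52, e0 y3 d53, e5 y1 d51 d41, e5 y2 d52 d42] at key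
  unfold c5
  linarith

def U1 : Set (ℝ × ℝ) := {x | 1 < x.1 ∧ 0 < x.2 ∧ x.2 < 1}
def U2 : Set (ℝ × ℝ) := {x | 1 < x.2 ∧ x.2 < x.1}

noncomputable def Qf (R : ℝ × ℝ → ℝ) (x : ℝ × ℝ) : ℝ :=
  U1.indicator (fun x => R ((x.1 - 1) / x.1, (x.1 - 1) / (x.1 - x.2))) x
    + U2.indicator (fun x => R ((x.1 - x.2) / x.1, (x.1 - x.2) / (x.1 - 1))) x

theorem isOpen_U1 : IsOpen U1 := by
  have h1 : IsOpen {p : ℝ × ℝ | 1 < p.1} := isOpen_lt continuous_const continuous_fst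
  have h2 : IsOpen {p : ℝ × ℝ | 0 < p.2} := isOpen_lt continuous_const continuous_snd
  have h3 : IsOpen {p : ℝ × ℝ | p.2 < 1} := isOpen_lt continuous_snd continuous_const
  exact h1.inter (h2.inter h3)

theorem isOpen_U2 : IsOpen U2 := by
  have h1 : IsOpen {p : ℝ × ℝ | 1 < p.2} := isOpen_lt continuous_const continuous_snd
  have h2 : IsOpen {p : ℝ × ℝ | p.2 < p.1} := isOpen_lt continuous_snd continuous_fst
  exact h1.inter h2

theorem maps1 {x : ℝ × ℝ} (hx : x ∈ U1) : ((x.1 - 1) / x.1, (x.1 - 1) / (x.1 - x.2)) ∈ P2 := by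
  obtain ⟨h1, h2, h3⟩ := hx
  have a : 0 < x.1 - 1 := by linarith
  have b : 0 < x.1 - x.2 := by linarith
  have c : 0 < x.1 := by linarith
  refine ⟨by positivity, ?_, ?_⟩
  · exact div_lt_div_of_pos_left a b (by linarith)
  · show (x.1 - 1) / (x.1 - x.2) < 1
    rw [div_lt_one b]; linarith

theorem maps2 {x : ℝ × ℝ} (hx : x ∈ U2) : ((x.1 - x.2) / x.1, (x.1 - x.2) / (x.1 - 1)) ∈ P2 := by
  obtain ⟨h1, h2⟩ := hx
  have a : 0 < x.1 - 1 := by linarith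
  have b : 0 < x.1 - x.2 := by linarith
  have c : 0 < x.1 := by linarith
  refine ⟨by positivity, ?_, ?_⟩
  · exact div_lt_div_of_pos_left b a (by linarith)
  · show (x.1 - x.2) / (x.1 - 1) < 1
    rw [div_lt_one a]; linarith

theorem Qf_bdd {R : ℝ × ℝ → ℝ} {M : ℝ} (hM : ∀ p ∈ P2, |R p| ≤ M) (x : ℝ × ℝ) : |Qf R x| ≤ 2 * M := by
  have M0 : 0 ≤ M := (abs_nonneg _).trans (hM (1/3, 1/2) ⟨by norm_num, by norm_num, by norm_num⟩)
  rw [Qf]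
  refine (abs_add_le _ _).trans ?_
  have a : |U1.indicator (fun x => R ((x.1 - 1) / x.1, (x.1 - 1) / (x.1 - x.2))) x| ≤ M := by
    by_cases h : x ∈ U1
    · rw [indicator_of_mem h]; exact hM _ (maps1 h)
    · rw [indicator_of_notMem h]; simpa using M0
  have b : |U2.indicator (fun x => R ((x.1 - x.2) / x.1, (x.1 - x.2) / (x.1 - 1))) x| ≤ M := by
    by_cases h : x ∈ U2
    · rw [indicator_of_mem h]; exact hM _ (maps2 h)
    · rw [indicator_of_notMem h]; simpa using M0
  linarith

theorem Qf_meas {R : ℝ × ℝ → ℝ} (hR : AEStronglyMeasurable R (volume.restrict P2)) :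
    AEStronglyMeasurable (Qf R) volume := by
  have a1 := hR.comp_quasiMeasurePreserving (qmp volume (U := U1)
    (Ψ := fun x => ((x.1 - 1) / x.1, (x.1 - 1) / (x.1 - x.2)))
    (Φ := fun x => (1 / (1 - x.1), 1 / (1 - x.1) - (1 / (1 - x.1) - 1) / x.2))
    (by fun_prop) (fun x hx => maps1 hx) (by
      intro x hx
      obtain ⟨h1, h2, h3⟩ := hx
      have e1 : 1 - x.1 ≠ 0 := by linarith
      have e2 : x.2 ≠ 0 := by linarith
      apply DifferentiableAt.differentiableWithinAt
      fun_prop (disch := assumption)) (by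
      intro x hx
      obtain ⟨h1, h2, h3⟩ := hx
      have a : x.1 - 1 ≠ 0 := by linarith
      have b : x.1 - x.2 ≠ 0 := by linarith
      have c : x.1 ≠ 0 := by linarith
      have e1 : 1 - (x.1 - 1) / x.1 = 1 / x.1 := by field_simp; ring
      ext
      · simp only [e1]; field_simp
      · simp only [e1]; field_simp; ring))
  have a2 := hR.comp_quasiMeasurePreserving (qmp volume (U := U2)
    (Ψ := fun x => ((x.1 - x.2) / x.1, (x.1 - x.2) / (x.1 - 1)))
    (Φ := fun x => (x.2 / (x.2 - x.1), x.2 * (1 - x.1) / (x.2 - x.1)))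
    (by fun_prop) (fun x hx => maps2 hx) (by
      intro x hx
      obtain ⟨h1, h2, h3⟩ := hx
      have e1 : x.2 - x.1 ≠ 0 := by linarith
      apply DifferentiableAt.differentiableWithinAt
      fun_prop (disch := assumption)) (by
      intro x hx
      obtain ⟨h1, h2⟩ := hx
      have a : x.1 - 1 ≠ 0 := by linarith
      have b : x.1 - x.2 ≠ 0 := by linarith
      have c : x.1 ≠ 0 := by linarith
      have e1 : 1 - (x.1 - x.2) / x.1 = x.2 / x.1 := by field_simp; ring
      have e2 : (x.1 - x.2) / (x.1 - 1) - (x.1 - x.2) / x.1 = (x.1 - x.2) / ((x.1 - 1) * x.1) := by field_simp; ring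
      ext
      · simp only [e2]; field_simp
      · simp only [e1, e2]; field_simp))
  exact ((aestronglyMeasurable_indicator_iff isOpen_U1.measurableSet).2 a1).add
    ((aestronglyMeasurable_indicator_iff isOpen_U2.measurableSet).2 a2)

noncomputable def mm (a b d s : ℝ) : ℝ := (-(d - a) * s - (-(b * (d - a)))) / (a * (d - b) - (d - b) * s)

theorem mm_eq (a b d s : ℝ) : mm a b d s = (s - b) * (d - a) / ((s - a) * (d - b)) := by
  rw [mm, ← neg_div_neg_eq]; congr 1 <;> ring

theorem Qf1 (R : ℝ × ℝ → ℝ) {a b d s t : ℝ} (h1 : a < b) (h2 : b < t) (h3 : t < d) (h4 : d < s) :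
    Qf R (mm a b d s, mm a b d t) = c5 R a b t d s := by
  have p1 : 0 < b - a := by linarith
  have p2 : 0 < t - b := by linarith
  have p3 : 0 < d - t := by linarith
  have p4 : 0 < s - d := by linarith
  have p5 : 0 < t - a := by linarith
  have p6 : 0 < d - b := by linarith
  have p7 : 0 < s - t := by linarith
  have p8 : 0 < d - a := by linarith
  have p9 : 0 < s - b := by linarith
  have p10 : 0 < s - a := by linarith
  have m1 : mm a b d s - 1 = (s - d) * (b - a) / ((s - a) * (d - b)) := by
    rw [mm_eq]; field_simp; ring
  have m2 : mm a b d s - mm a b d t = (b - a) * (d - a) * (s - t) / ((s - a) * (t - a) * (d - b)) := by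
    rw [mm_eq, mm_eq]; field_simp; ring
  have m3 : 1 - mm a b d t = (d - t) * (b - a) / ((t - a) * (d - b)) := by
    rw [mm_eq]; field_simp; ring
  have k1 : 0 < mm a b d s - 1 := by rw [m1]; positivity
  have k2 : 0 < mm a b d t := by rw [mm_eq]; positivity
  have k3 : 0 < 1 - mm a b d t := by rw [m3]; positivity
  rw [Qf, indicator_of_mem (show (mm a b d s, mm a b d t) ∈ U1 from ⟨by simpa using k1, k2, by simpa using k3⟩),
    indicator_of_notMem (show (mm a b d s, mm a b d t) ∉ U2 from fun h => by have := h.1; simp only at this; linarith), add_zero, c5]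
  simp only [m1, m2]
  rw [mm_eq]
  congr 2 <;> field_simp

theorem Qf2 (R : ℝ × ℝ → ℝ) {a b d s t : ℝ} (h1 : a < b) (h2 : b < d) (h3 : d < t) (h4 : t < s) :
    Qf R (mm a b d s, mm a b d t) = c5 R a b d t s := by
  have p1 : 0 < b - a := by linarith
  have p2 : 0 < t - b := by linarith
  have p3 : 0 < t - d := by linarith
  have p4 : 0 < s - d := by linarith
  have p5 : 0 < t - a := by linarith
  have p6 : 0 < d - b := by linarith
  have p7 : 0 < s - t := by linarith
  have p8 : 0 < d - a := by linarith
  have p9 : 0 < s - b := by linarith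
  have p10 : 0 < s - a := by linarith
  have m1 : mm a b d s - 1 = (s - d) * (b - a) / ((s - a) * (d - b)) := by
    rw [mm_eq]; field_simp; ring
  have m2 : mm a b d s - mm a b d t = (b - a) * (d - a) * (s - t) / ((s - a) * (t - a) * (d - b)) := by
    rw [mm_eq, mm_eq]; field_simp; ring
  have m3 : mm a b d t - 1 = (t - d) * (b - a) / ((t - a) * (d - b)) := by
    rw [mm_eq]; field_simp; ring
  have k1 : 0 < mm a b d s - mm a b d t := by rw [m2]; positivity
  have k3 : 0 < mm a b d t - 1 := by rw [m3]; positivity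
  rw [Qf, indicator_of_mem (show (mm a b d s, mm a b d t) ∈ U2 from ⟨by simpa using k3, by simpa using k1⟩),
    indicator_of_notMem (show (mm a b d s, mm a b d t) ∉ U1 from fun h => by have := h.2.2; simp only at this; linarith), zero_add, c5]
  simp only [m1, m2]
  rw [mm_eq]
  congr 2 <;> field_simp

structure Bp (c : ℝ) (p : ℝ → ℝ) : Prop where
  cd : ContDiff ℝ 2 p
  cs : HasCompactSupport p
  ts : tsupport p ⊆ Ioo c (c + 1)
  it : ∫ x, p x = 1

theorem Bp_exists (c : ℝ) : ∃ p, Bp c p := by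
  let f : ContDiffBump (c + 1/2) := ⟨1/8, 1/4, by norm_num, by norm_num⟩
  refine ⟨f.normed volume, f.contDiff_normed, f.hasCompactSupport_normed, ?_, f.integral_normed⟩
  rw [f.tsupport_normed_eq]
  intro x hx
  rw [Real.closedBall_eq_Icc] at hx
  have h1 : c + 1/2 - 1/4 ≤ x := hx.1
  have h2 : x ≤ c + 1/2 + 1/4 := hx.2
  constructor <;> linarith

theorem Bp.zero {c : ℝ} {p : ℝ → ℝ} (h : Bp c p) {t : ℝ} (ht : t ∉ Ioo c (c + 1)) : p t = 0 := by
  by_contra hne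
  exact ht (h.ts (subset_tsupport _ hne))

theorem Bp.int {c : ℝ} {p : ℝ → ℝ} (h : Bp c p) : Integrable p :=
  h.cd.continuous.integrable_of_hasCompactSupport h.cs

theorem pair_meas {Q : ℝ × ℝ → ℝ} (hQ : AEStronglyMeasurable Q volume) {u v w z u' v' w' z' : ℝ}
    (hD : u * z - v * w ≠ 0) (hD' : u' * z' - v' * w' ≠ 0) :
    AEStronglyMeasurable (fun x : ℝ × ℝ => Q ((z * x.1 - v) / (u - w * x.1), (z' * x.2 - v') / (u' - w' * x.2))) volume := by
  have hq := qmp (volume : Measure (ℝ × ℝ)) (U := {x | u - w * x.1 ≠ 0 ∧ u' - w' * x.2 ≠ 0})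
    (V := {x | w * x.1 + z ≠ 0 ∧ w' * x.2 + z' ≠ 0})
    (Ψ := fun x => ((z * x.1 - v) / (u - w * x.1), (z' * x.2 - v') / (u' - w' * x.2)))
    (Φ := fun x => ((u * x.1 + v) / (w * x.1 + z), (u' * x.2 + v') / (w' * x.2 + z')))
    (by fun_prop) (by
      rintro x ⟨h1, h2⟩
      refine ⟨?_, ?_⟩
      · show _ ≠ _
        simp only
        rw [(mob_inv2 hD h1).1]; exact div_ne_zero hD h1
      · show _ ≠ _
        simp only
        rw [(mob_inv2 hD' h2).1]; exact div_ne_zero hD' h2) (by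
      rintro x ⟨h1, h2⟩
      apply DifferentiableAt.differentiableWithinAt
      fun_prop (disch := assumption)) (by
      rintro x ⟨h1, h2⟩
      ext
      · exact (mob_inv2 hD h1).2
      · exact (mob_inv2 hD' h2).2)
  have hwu : -w ≠ 0 ∨ u ≠ 0 := by
    by_contra! h; apply hD; rw [neg_eq_zero.1 h.1, h.2]; ring
  have hwu' : -w' ≠ 0 ∨ u' ≠ 0 := by
    by_contra! h; apply hD'; rw [neg_eq_zero.1 h.1, h.2]; ring
  have a1 : ∀ᵐ x : ℝ × ℝ, u - w * x.1 ≠ 0 := by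
    have := measure_eq_zero_iff_ae_notMem.1 (null_lin hwu)
    rw [Measure.volume_eq_prod]
    filter_upwards [Measure.quasiMeasurePreserving_fst.ae this] with x hx
    intro h; apply hx
    simp only [mem_compl_iff, mem_ofPred_eq, not_not]; linarith
  have a2 : ∀ᵐ x : ℝ × ℝ, u' - w' * x.2 ≠ 0 := by
    have := measure_eq_zero_iff_ae_notMem.1 (null_lin hwu')
    rw [Measure.volume_eq_prod]
    filter_upwards [Measure.quasiMeasurePreserving_snd.ae this] with x hx
    intro h; apply hx
    simp only [mem_compl_iff, mem_ofPred_eq, not_not]; linarith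
  rw [Measure.restrict_eq_self_of_ae_mem (s := {x : ℝ × ℝ | u - w * x.1 ≠ 0 ∧ u' - w' * x.2 ≠ 0}) (a1.and a2)] at hq
  exact hQ.restrict.comp_quasiMeasurePreserving hq

noncomputable def sp (x0 x2 x3 y : ℝ) : ℝ :=
  (x3 * (x2 - x0) + y * (x0 * (x3 - x2))) / ((x2 - x0) + y * (x3 - x2))

noncomputable def nn (x0 x2 x3 a b d y : ℝ) : ℝ :=
  ((d - a) * (x0 * (x3 - x2) - b * (x3 - x2)) * y - (-((d - a) * (x3 * (x2 - x0) - b * (x2 - x0))))) /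
  ((d - b) * (x3 * (x2 - x0) - a * (x2 - x0)) - (-((d - b) * (x0 * (x3 - x2) - a * (x3 - x2)))) * y)

theorem sp_mem {x0 x2 x3 y : ℝ} (h1 : x0 < x2) (h2 : x2 < x3) (hy : y ∈ Ioo (0:ℝ) 1) :
    x2 < sp x0 x2 x3 y ∧ sp x0 x2 x3 y < x3 := by
  obtain ⟨ha, hb⟩ := hy
  have e1 : 0 < x2 - x0 := by linarith
  have e2 : 0 < x3 - x2 := by linarith
  have e3 : 0 < x3 - x0 := by linarith
  have e4 : 0 < 1 - y := by linarith
  have hd : 0 < (x2 - x0) + y * (x3 - x2) := by positivity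
  have s1 : sp x0 x2 x3 y - x2 = (x2 - x0) * (x3 - x2) * (1 - y) / ((x2 - x0) + y * (x3 - x2)) := by
    rw [sp, div_sub' hd.ne']; congr 1; ring
  have s2 : x3 - sp x0 x2 x3 y = y * (x3 - x2) * (x3 - x0) / ((x2 - x0) + y * (x3 - x2)) := by
    rw [sp, sub_div' hd.ne']; congr 1; ring
  have : 0 < sp x0 x2 x3 y - x2 := by rw [s1]; positivity
  have : 0 < x3 - sp x0 x2 x3 y := by rw [s2]; positivity
  constructor <;> linarith

theorem nn_eq {x0 x2 x3 y : ℝ} (a b d : ℝ) (h1 : x0 < x2) (h2 : x2 < x3) (hy : y ∈ Ioo (0:ℝ) 1) :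
    nn x0 x2 x3 a b d y = mm a b d (sp x0 x2 x3 y) := by
  obtain ⟨ha, hb⟩ := hy
  have e1 : 0 < x2 - x0 := by linarith
  have e2 : 0 < x3 - x2 := by linarith
  have hd : 0 < (x2 - x0) + y * (x3 - x2) := by positivity
  rw [mm_eq, sp, nn, div_sub' hd.ne', div_sub' hd.ne', div_mul_eq_mul_div, div_mul_eq_mul_div, div_div_div_cancel_right₀ hd.ne']
  congr 1 <;> ring

theorem c5_sp (R : ℝ × ℝ → ℝ) {x0 x1 x2 x3 y : ℝ} (h0 : x0 < x1) (h1 : x1 < x2) (h2 : x2 < x3) (hy : y ∈ Ioo (0:ℝ) 1) :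
    c5 R x0 x1 x2 (sp x0 x2 x3 y) x3 = R ((x1 - x0) * (x3 - x2) / ((x2 - x0) * (x3 - x1)) * y, y) := by
  obtain ⟨ha, hb⟩ := hy
  have e1 : 0 < x2 - x0 := by linarith
  have e2 : 0 < x3 - x2 := by linarith
  have e3 : 0 < x3 - x0 := by linarith
  have e4 : 0 < x3 - x1 := by linarith
  have hd : 0 < (x2 - x0) + y * (x3 - x2) := by positivity
  have s1 : sp x0 x2 x3 y - x0 = (x2 - x0) * (x3 - x0) / ((x2 - x0) + y * (x3 - x2)) := by
    rw [sp, div_sub' hd.ne']; congr 1; ring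
  have s2 : x3 - sp x0 x2 x3 y = y * (x3 - x2) * (x3 - x0) / ((x2 - x0) + y * (x3 - x2)) := by
    rw [sp, sub_div' hd.ne']; congr 1; ring
  rw [c5, s1, s2]
  congr 2 <;> field_simp

theorem detA {a b d : ℝ} (h1 : a < b) (h2 : b < d) :
    a * (d - b) * (-(d - a)) - (-(b * (d - a))) * (d - b) ≠ 0 := by
  have : a * (d - b) * (-(d - a)) - (-(b * (d - a))) * (d - b) = (d - b) * (d - a) * (b - a) := by ring
  rw [this]
  have e1 : 0 < d - b := by linarith
  have e2 : 0 < d - a := by linarith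
  have e3 : 0 < b - a := by linarith
  positivity

theorem detB {x0 x2 x3 a b d : ℝ} (h1 : a < b) (h2 : b < d) (h3 : x0 < x2) (h4 : x2 < x3) :
    ((d - b) * (x3 * (x2 - x0) - a * (x2 - x0))) * ((d - a) * (x0 * (x3 - x2) - b * (x3 - x2)))
      - (-((d - a) * (x3 * (x2 - x0) - b * (x2 - x0)))) * (-((d - b) * (x0 * (x3 - x2) - a * (x3 - x2)))) ≠ 0 := by
  have : ((d - b) * (x3 * (x2 - x0) - a * (x2 - x0))) * ((d - a) * (x0 * (x3 - x2) - b * (x3 - x2)))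
      - (-((d - a) * (x3 * (x2 - x0) - b * (x2 - x0)))) * (-((d - b) * (x0 * (x3 - x2) - a * (x3 - x2))))
      = -((d - b) * (d - a) * (b - a) * ((x2 - x0) * (x3 - x2) * (x3 - x0))) := by ring
  rw [this, neg_ne_zero]
  have e1 : 0 < d - b := by linarith
  have e2 : 0 < d - a := by linarith
  have e3 : 0 < b - a := by linarith
  have e4 : 0 < x2 - x0 := by linarith
  have e5 : 0 < x3 - x2 := by linarith
  have e6 : 0 < x3 - x0 := by linarith
  positivity

noncomputable def BB (R : ℝ × ℝ → ℝ) (q : ℝ → ℝ) (x0 x2 x3 a b d s : ℝ) : ℝ :=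
  ∫ y, q y * Qf R (mm a b d s, nn x0 x2 x3 a b d y)

theorem slice {R : ℝ × ℝ → ℝ} (hR : AEStronglyMeasurable R (volume.restrict P2)) {M : ℝ}
    (hM : ∀ p ∈ P2, |R p| ≤ M) {c c' : ℝ} {p q : ℝ → ℝ} (hp : Bp c p) (hq : Bp c' q) {x0 x2 x3 a b d : ℝ}
    (h1 : a < b) (h2 : b < d) (h3 : x0 < x2) (h4 : x2 < x3) :
    (∀ᵐ s, Integrable (fun y => q y * Qf R (mm a b d s, nn x0 x2 x3 a b d y))) ∧
    Integrable (fun s => p s * BB R q x0 x2 x3 a b d s) := by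
  have hm := pair_meas (Qf_meas hR) (detA h1 h2) (detB h1 h2 h3 h4)
  have hm2 : AEStronglyMeasurable (fun x : ℝ × ℝ => q x.2 * Qf R (mm a b d x.1, nn x0 x2 x3 a b d x.2)) volume :=
    (hq.cd.continuous.comp continuous_snd).aestronglyMeasurable.mul hm
  have hm3 : AEStronglyMeasurable (BB R q x0 x2 x3 a b d) volume := by
    rw [Measure.volume_eq_prod] at hm2
    exact hm2.integral_prod_right'
  constructor
  · rw [Measure.volume_eq_prod] at hm2
    filter_upwards [hm2.prodMk_left] with s hs
    refine (hq.int.norm.mul_const (2 * M)).mono' hs (Filter.Eventually.of_forall fun y => ?_)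
    simp only [norm_mul]
    exact mul_le_mul_of_nonneg_left (Qf_bdd hM _) (norm_nonneg _)
  · refine (hp.int.norm.mul_const ((∫ y, ‖q y‖ * (2 * M)))).mono' (hp.cd.continuous.aestronglyMeasurable.mul hm3) (Filter.Eventually.of_forall fun s => ?_)
    simp only [norm_mul]
    refine mul_le_mul_of_nonneg_left ?_ (norm_nonneg _)
    refine norm_integral_le_of_norm_le (hq.int.norm.mul_const (2 * M)) (Filter.Eventually.of_forall fun y => ?_)
    simp only [norm_mul]
    exact mul_le_mul_of_nonneg_left (Qf_bdd hM _) (norm_nonneg _)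

theorem int4 {f g h k : ℝ → ℝ} (i1 : Integrable f) (i2 : Integrable g) (i3 : Integrable h) (i4 : Integrable k) :
    Integrable (fun s => f s - g s + h s + k s) ∧
    ∫ s, (f s - g s + h s + k s) = (∫ s, f s) - (∫ s, g s) + (∫ s, h s) + ∫ s, k s := by
  have a : Integrable (fun s => f s - g s) := i1.sub i2
  have b : Integrable (fun s => f s - g s + h s) := a.add i3
  refine ⟨b.add i4, ?_⟩
  rw [integral_add b i4, integral_add a i3, integral_sub i1 i2]

theorem int5 {f g h k l : ℝ → ℝ} (i1 : Integrable f) (i2 : Integrable g) (i3 : Integrable h) (i4 : Integrable k)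
    (i5 : Integrable l) :
    ∫ s, (f s - g s + h s - k s + l s) = (∫ s, f s) - (∫ s, g s) + (∫ s, h s) - (∫ s, k s) + ∫ s, l s := by
  have a : Integrable (fun s => f s - g s) := i1.sub i2
  have b : Integrable (fun s => f s - g s + h s) := a.add i3
  have c : Integrable (fun s => f s - g s + h s - k s) := b.sub i4
  rw [integral_add c i5, integral_sub b i4, integral_add a i3, integral_sub i1 i2]

noncomputable def LL (R : ℝ × ℝ → ℝ) (q : ℝ → ℝ) (c : ℝ) : ℝ := -∫ y, q y * R (c * y, y)

noncomputable def B4 (R : ℝ × ℝ → ℝ) (q : ℝ → ℝ) (x0 x1 x2 x3 s : ℝ) : ℝ :=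
  BB R q x0 x2 x3 x1 x2 x3 s - BB R q x0 x2 x3 x0 x2 x3 s + BB R q x0 x2 x3 x0 x1 x3 s
    + BB R q x0 x2 x3 x0 x1 x2 s

noncomputable def DT (R : ℝ × ℝ → ℝ) (p q : ℝ → ℝ) (x0 x1 x2 x3 : ℝ) : ℝ :=
  ∫ s, p s * B4 R q x0 x1 x2 x3 s

theorem B4_int {R : ℝ × ℝ → ℝ} (hR : AEStronglyMeasurable R (volume.restrict P2)) {M : ℝ}
    (hM : ∀ p ∈ P2, |R p| ≤ M) {p q : ℝ → ℝ} (hp : Bp 2 p) (hq : Bp 0 q) {x0 x1 x2 x3 : ℝ}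
    (h0 : x0 < x1) (h1 : x1 < x2) (h2 : x2 < x3) :
    Integrable (fun s => p s * B4 R q x0 x1 x2 x3 s) ∧ DT R p q x0 x1 x2 x3 =
      (∫ s, p s * BB R q x0 x2 x3 x1 x2 x3 s) - (∫ s, p s * BB R q x0 x2 x3 x0 x2 x3 s)
       + (∫ s, p s * BB R q x0 x2 x3 x0 x1 x3 s) + (∫ s, p s * BB R q x0 x2 x3 x0 x1 x2 s) := by
  have i1 := (slice hR hM hp hq (x0 := x0) (x2 := x2) (x3 := x3) (a := x1) (b := x2) (d := x3) h1 h2 (by linarith) h2).2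
  have i2 := (slice hR hM hp hq (x0 := x0) (x2 := x2) (x3 := x3) (a := x0) (b := x2) (d := x3) (by linarith) h2 (by linarith) h2).2
  have i3 := (slice hR hM hp hq (x0 := x0) (x2 := x2) (x3 := x3) (a := x0) (b := x1) (d := x3) h0 (by linarith) (by linarith) h2).2
  have i4 := (slice hR hM hp hq (x0 := x0) (x2 := x2) (x3 := x3) (a := x0) (b := x1) (d := x2) h0 h1 (by linarith) h2).2
  have e : (fun s => p s * B4 R q x0 x1 x2 x3 s) = fun s => p s * BB R q x0 x2 x3 x1 x2 x3 s - p s * BB R q x0 x2 x3 x0 x2 x3 s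
       + p s * BB R q x0 x2 x3 x0 x1 x3 s + p s * BB R q x0 x2 x3 x0 x1 x2 s := by
    ext s; rw [B4]; ring
  refine ⟨?_, ?_⟩
  · rw [e]; exact ((i1.sub i2).add i3).add i4
  · rw [DT, e]; exact (int4 i1 i2 i3 i4).2

theorem G4 {R : ℝ × ℝ → ℝ} (hR : AEStronglyMeasurable R (volume.restrict P2)) {M : ℝ}
    (hM : ∀ p ∈ P2, |R p| ≤ M) (h6 : H6 R) {q : ℝ → ℝ} (hq : Bp 0 q) {x0 x1 x2 x3 : ℝ}
    (h0 : x0 < x1) (h1 : x1 < x2) (h2 : x2 < x3) (h3 : x3 < 2) :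
    ∀ᵐ s, s ∈ Ioo (2:ℝ) 3 → c5 R x0 x1 x2 x3 s =
      LL R q ((x1 - x0) * (x3 - x2) / ((x2 - x0) * (x3 - x1))) + B4 R q x0 x1 x2 x3 s := by
  filter_upwards [(slice hR hM hq hq (x0 := x0) (x2 := x2) (x3 := x3) (a := x1) (b := x2) (d := x3) h1 h2 (by linarith) h2).1,
    (slice hR hM hq hq (x0 := x0) (x2 := x2) (x3 := x3) (a := x0) (b := x2) (d := x3) (by linarith) h2 (by linarith) h2).1,
    (slice hR hM hq hq (x0 := x0) (x2 := x2) (x3 := x3) (a := x0) (b := x1) (d := x3) h0 (by linarith) (by linarith) h2).1,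
    (slice hR hM hq hq (x0 := x0) (x2 := x2) (x3 := x3) (a := x0) (b := x1) (d := x2) h0 h1 (by linarith) h2).1] with s i1 i2 i3 i4 hs
  have h02 : x0 < x2 := by linarith
  set f := c5 R x0 x1 x2 x3 s with hf
  have e : (fun y => q y * R ((x1 - x0) * (x3 - x2) / ((x2 - x0) * (x3 - x1)) * y, y)) = fun y =>
    q y * Qf R (mm x1 x2 x3 s, nn x0 x2 x3 x1 x2 x3 y) - q y * Qf R (mm x0 x2 x3 s, nn x0 x2 x3 x0 x2 x3 y)
    + q y * Qf R (mm x0 x1 x3 s, nn x0 x2 x3 x0 x1 x3 y) + q y * Qf R (mm x0 x1 x2 s, nn x0 x2 x3 x0 x1 x2 y) - q y * f := by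
    ext y
    by_cases hy : y ∈ Ioo (0:ℝ) 1
    · obtain ⟨a1, a2⟩ := sp_mem h02 h2 hy
      rw [nn_eq x1 x2 x3 h02 h2 hy, nn_eq x0 x2 x3 h02 h2 hy, nn_eq x0 x1 x3 h02 h2 hy, nn_eq x0 x1 x2 h02 h2 hy,
        ← c5_sp R h0 h1 h2 hy]
      have hs2 : x3 < s := by linarith [hs.1]
      rw [Qf1 R h1 a1 a2 hs2, Qf1 R h02 a1 a2 hs2, Qf1 R h0 (by linarith) a2 hs2, Qf2 R h0 h1 a1 (by linarith)]
      have := c5_six h6 h0 h1 a1 a2 hs2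
      rw [hf]
      linear_combination (-q y) * this
    · rw [hq.zero (by simpa using hy)]; ring
  have i5 : Integrable (fun y => q y * f) := hq.int.mul_const f
  rw [LL, e, integral_sub (int4 i1 i2 i3 i4).1 i5]
  rw [show (∫ y, q y * f) = f by rw [integral_mul_const, hq.it, one_mul]]
  rw [(int4 i1 i2 i3 i4).2]
  rw [B4, BB, BB, BB, BB]
  ring

def O4 : Set (ℝ × ℝ × ℝ × ℝ) := {x | x.1 < x.2.1 ∧ x.2.1 < x.2.2.1 ∧ x.2.2.1 < x.2.2.2 ∧ x.2.2.2 < 2}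

theorem isOpen_O4 : IsOpen O4 := by
  have h1 : IsOpen {x : ℝ × ℝ × ℝ × ℝ | x.1 < x.2.1} := isOpen_lt (by fun_prop) (by fun_prop)
  have h2 : IsOpen {x : ℝ × ℝ × ℝ × ℝ | x.2.1 < x.2.2.1} := isOpen_lt (by fun_prop) (by fun_prop)
  have h3 : IsOpen {x : ℝ × ℝ × ℝ × ℝ | x.2.2.1 < x.2.2.2} := isOpen_lt (by fun_prop) (by fun_prop)
  have h4 : IsOpen {x : ℝ × ℝ × ℝ × ℝ | x.2.2.2 < 2} := isOpen_lt (by fun_prop) (by fun_prop)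
  exact h1.inter (h2.inter (h3.inter h4))

theorem BB_smooth {R : ℝ × ℝ → ℝ} (hR : AEStronglyMeasurable R (volume.restrict P2)) {M : ℝ}
    (hM : ∀ p ∈ P2, |R p| ≤ M) {p q : ℝ → ℝ} (hp : Bp 2 p) (hq : Bp 0 q)
    {P : Type*} [NormedAddCommGroup P] [NormedSpace ℝ P] [LocallyCompactSpace P] {Ω : Set P} (hΩ : IsOpen Ω)
    {x0 x2 x3 a b d : P → ℝ} (c0 : ContDiff ℝ 2 x0) (c2 : ContDiff ℝ 2 x2) (c3 : ContDiff ℝ 2 x3)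
    (ca : ContDiff ℝ 2 a) (cb : ContDiff ℝ 2 b) (cd : ContDiff ℝ 2 d)
    (h1 : ∀ θ ∈ Ω, a θ < b θ) (h2 : ∀ θ ∈ Ω, b θ < d θ) (h3 : ∀ θ ∈ Ω, x0 θ < x2 θ)
    (h4 : ∀ θ ∈ Ω, x2 θ < x3 θ) (h5 : ∀ θ ∈ Ω, a θ < x2 θ) (h6 : ∀ θ ∈ Ω, a θ < 2) :
    ContDiffOn ℝ 2 (fun θ => ∫ s, p s * BB R q (x0 θ) (x2 θ) (x3 θ) (a θ) (b θ) (d θ) s) Ω := by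
  have far : ∀ (c : ℝ) (r : ℝ → ℝ), 0 ≤ c → c ≤ 2 → Bp c r → ∀ t, 3 ≤ |t| → r t = 0 := by
    intro c r hc hc2 hr t ht
    apply hr.zero
    rintro ⟨h1, h2⟩
    rw [abs_of_pos (by linarith)] at ht
    linarith
  exact smooth_pair hp.cd (far 2 p (by norm_num) (by norm_num) hp) hp.cs hq.cd (far 0 q (by norm_num) (by norm_num) hq) hq.cs
    (Qf_meas hR) (Qf_bdd hM) hΩ (u := fun θ => a θ * (d θ - b θ)) (v := fun θ => -(b θ * (d θ - a θ)))
    (w := fun θ => d θ - b θ) (z := fun θ => -(d θ - a θ))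
    (u' := fun θ => (d θ - b θ) * (x3 θ * (x2 θ - x0 θ) - a θ * (x2 θ - x0 θ)))
    (v' := fun θ => -((d θ - a θ) * (x3 θ * (x2 θ - x0 θ) - b θ * (x2 θ - x0 θ))))
    (w' := fun θ => -((d θ - b θ) * (x0 θ * (x3 θ - x2 θ) - a θ * (x3 θ - x2 θ))))
    (z' := fun θ => (d θ - a θ) * (x0 θ * (x3 θ - x2 θ) - b θ * (x3 θ - x2 θ)))
    (by fun_prop) (by fun_prop) (by fun_prop) (by fun_prop) (by fun_prop) (by fun_prop) (by fun_prop) (by fun_prop)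
    (fun θ hθ => detA (h1 θ hθ) (h2 θ hθ))
    (by
      intro θ hθ t ht
      have e1 := (hp.ts ht).1
      have e2 := h6 θ hθ
      have e3 := h2 θ hθ
      rw [show a θ * (d θ - b θ) - (d θ - b θ) * t = (d θ - b θ) * (a θ - t) by ring]
      exact mul_ne_zero (by linarith) (by linarith))
    (fun θ hθ => detB (h1 θ hθ) (h2 θ hθ) (h3 θ hθ) (h4 θ hθ))
    (by
      intro θ hθ t ht
      have ht2 := hq.ts ht
      rw [zero_add] at ht2
      have e3 := h2 θ hθ
      have e4 := h3 θ hθ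
      have e5 := h4 θ hθ
      have e6 := h5 θ hθ
      have ht0 := ht2.1
      have ht1 := ht2.2
      have e1 : 0 < x2 θ - x0 θ := by linarith
      have e2 : 0 < x3 θ - x2 θ := by linarith
      rw [show (d θ - b θ) * (x3 θ * (x2 θ - x0 θ) - a θ * (x2 θ - x0 θ)) - -((d θ - b θ) * (x0 θ * (x3 θ - x2 θ) - a θ * (x3 θ - x2 θ))) * t
        = (d θ - b θ) * ((x2 θ - x0 θ) * (x3 θ - x2 θ) * (1 - t) + (x2 θ - a θ) * ((x2 θ - x0 θ) + t * (x3 θ - x2 θ))) by ring]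
      apply mul_ne_zero (by linarith)
      apply ne_of_gt
      have e7 : 0 < x2 θ - a θ := by linarith
      have e8 : 0 < 1 - t := by linarith
      positivity)

theorem DT_smooth {R : ℝ × ℝ → ℝ} (hR : AEStronglyMeasurable R (volume.restrict P2)) {M : ℝ}
    (hM : ∀ p ∈ P2, |R p| ≤ M) {p q : ℝ → ℝ} (hp : Bp 2 p) (hq : Bp 0 q) :
    ContDiffOn ℝ 2 (fun x : ℝ × ℝ × ℝ × ℝ => DT R p q x.1 x.2.1 x.2.2.1 x.2.2.2) O4 := by
  have k0 : ContDiff ℝ 2 (fun x : ℝ × ℝ × ℝ × ℝ => x.1) := by fun_prop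
  have k1 : ContDiff ℝ 2 (fun x : ℝ × ℝ × ℝ × ℝ => x.2.1) := by fun_prop
  have k2 : ContDiff ℝ 2 (fun x : ℝ × ℝ × ℝ × ℝ => x.2.2.1) := by fun_prop
  have k3 : ContDiff ℝ 2 (fun x : ℝ × ℝ × ℝ × ℝ => x.2.2.2) := by fun_prop
  have s1 := BB_smooth hR hM hp hq isOpen_O4 k0 k2 k3 k1 k2 k3 (fun x hx => hx.2.1) (fun x hx => hx.2.2.1)
    (fun x hx => hx.1.trans hx.2.1) (fun x hx => hx.2.2.1) (fun x hx => hx.2.1) (fun x hx => hx.2.1.trans (hx.2.2.1.trans hx.2.2.2))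
  have s2 := BB_smooth hR hM hp hq isOpen_O4 k0 k2 k3 k0 k2 k3 (fun x hx => hx.1.trans hx.2.1) (fun x hx => hx.2.2.1)
    (fun x hx => hx.1.trans hx.2.1) (fun x hx => hx.2.2.1) (fun x hx => hx.1.trans hx.2.1) (fun x hx => hx.1.trans (hx.2.1.trans (hx.2.2.1.trans hx.2.2.2)))
  have s3 := BB_smooth hR hM hp hq isOpen_O4 k0 k2 k3 k0 k1 k3 (fun x hx => hx.1) (fun x hx => hx.2.1.trans hx.2.2.1)
    (fun x hx => hx.1.trans hx.2.1) (fun x hx => hx.2.2.1) (fun x hx => hx.1.trans hx.2.1) (fun x hx => hx.1.trans (hx.2.1.trans (hx.2.2.1.trans hx.2.2.2)))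
  have s4 := BB_smooth hR hM hp hq isOpen_O4 k0 k2 k3 k0 k1 k2 (fun x hx => hx.1) (fun x hx => hx.2.1)
    (fun x hx => hx.1.trans hx.2.1) (fun x hx => hx.2.2.1) (fun x hx => hx.1.trans hx.2.1) (fun x hx => hx.1.trans (hx.2.1.trans (hx.2.2.1.trans hx.2.2.2)))
  refine (((s1.sub s2).add s3).add s4).congr ?_
  intro x hx
  exact (B4_int hR hM hp hq hx.1 hx.2.1 hx.2.2.1).2

theorem LL_props {R : ℝ × ℝ → ℝ} (hR : AEStronglyMeasurable R (volume.restrict P2)) {M : ℝ}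
    (hM : ∀ p ∈ P2, |R p| ≤ M) {q : ℝ → ℝ} (hq : Bp 0 q) :
    AEMeasurable (LL R q) (volume.restrict (Ioo (0:ℝ) 1)) ∧ ∃ B, ∀ x ∈ Ioo (0:ℝ) 1, |LL R q x| ≤ B := by
  have mem : ∀ c ∈ Ioo (0:ℝ) 1, ∀ y ∈ Ioo (0:ℝ) 1, (c * y, y) ∈ P2 := by
    intro c hc y hy
    refine ⟨mul_pos hc.1 hy.1, ?_, hy.2⟩
    show c * y < y
    nlinarith [hc.2, hy.1]
  constructor
  · have a := hR.comp_quasiMeasurePreserving (qmp (volume : Measure (ℝ × ℝ)) (U := Ioo (0:ℝ) 1 ×ˢ Ioo (0:ℝ) 1)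
      (Ψ := fun x => (x.1 * x.2, x.2)) (Φ := fun x => (x.1 / x.2, x.2)) (by fun_prop)
      (fun x hx => mem x.1 hx.1 x.2 hx.2) (by
        intro x hx
        have e2 : x.2 ≠ 0 := by have := hx.1; have := hx.2.1; linarith
        apply DifferentiableAt.differentiableWithinAt
        fun_prop (disch := assumption)) (by
        intro x hx
        have e2 : x.2 ≠ 0 := hx.2.1.ne'
        ext
        · simp only; field_simp
        · rfl))
    have b : AEStronglyMeasurable (fun x : ℝ × ℝ => q x.2 * R (x.1 * x.2, x.2)) (volume.restrict (Ioo (0:ℝ) 1 ×ˢ Ioo (0:ℝ) 1)) :=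
      (hq.cd.continuous.comp continuous_snd).aestronglyMeasurable.mul a
    rw [Measure.volume_eq_prod, ← Measure.prod_restrict] at b
    have c := b.integral_prod_right'
    have d : LL R q = fun c => -∫ y in Ioo (0:ℝ) 1, q y * R (c * y, y) := by
      ext c
      rw [LL, setIntegral_eq_integral_of_forall_compl_eq_zero]
      intro y hy
      rw [hq.zero (by simpa using hy), zero_mul]
    rw [d]
    exact c.neg.aemeasurable
  · refine ⟨∫ y, ‖q y‖ * M, fun c hc => ?_⟩
    rw [LL, abs_neg, ← Real.norm_eq_abs]
    refine norm_integral_le_of_norm_le (hq.int.norm.mul_const M) (Filter.Eventually.of_forall fun y => ?_)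
    rw [norm_mul]
    by_cases hy : y ∈ Ioo (0:ℝ) 1
    · exact mul_le_mul_of_nonneg_left (hM _ (mem c hc y hy)) (norm_nonneg _)
    · rw [hq.zero (by simpa using hy)]; simp

theorem stage1 {R : ℝ × ℝ → ℝ} (hRm : AEMeasurable R (volume.restrict P2))
    (hRb : ∃ M : ℝ, ∀ p ∈ P2, |R p| ≤ M) (h6 : H6 R) :
    ∃ L : ℝ → ℝ, AEMeasurable L (volume.restrict (Ioo (0:ℝ) 1)) ∧ (∃ M, ∀ x ∈ Ioo (0:ℝ) 1, |L x| ≤ M) ∧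
      ContDiffOn ℝ 2 (fun p : ℝ × ℝ => R p - dl L p.1 p.2) P2 := by
  obtain ⟨M, hM⟩ := hRb
  have hR := hRm.aestronglyMeasurable
  obtain ⟨p, hp⟩ := Bp_exists 2
  obtain ⟨q, hq⟩ := Bp_exists 0
  obtain ⟨m1, m2⟩ := LL_props hR hM hq
  refine ⟨LL R q, m1, m2, ?_⟩
  have sm := DT_smooth hR hM hp hq
  have ord : ∀ x y : ℝ, 0 < x → x < y → y < 1 → 0 < x / (1 + x) ∧ x / (1 + x) < y / (1 + y) ∧ y / (1 + y) < 1 / 2 := by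
    intro x y h1 h2 h3
    have hy : 0 < y := by linarith
    refine ⟨by positivity, ?_, ?_⟩
    · rw [div_lt_div_iff₀ (by positivity) (by positivity)]; nlinarith
    · rw [div_lt_div_iff₀ (by positivity) (by positivity)]; nlinarith
  have cx : ContDiffOn ℝ 2 (fun a : ℝ × ℝ => a.1 / (1 + a.1)) P2 := by
    apply ContDiffOn.div (by fun_prop) (by fun_prop)
    intro a ha
    have := ha.1
    linarith
  have cy : ContDiffOn ℝ 2 (fun a : ℝ × ℝ => a.2 / (1 + a.2)) P2 := by
    apply ContDiffOn.div (by fun_prop) (by fun_prop)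
    intro a ha
    have := ha.1.trans ha.2.1
    linarith
  have c0 : ∀ r : ℝ, ContDiffOn ℝ 2 (fun _ : ℝ × ℝ => r) P2 := fun r => contDiffOn_const
  have t0 := sm.comp (cx.prodMk (cy.prodMk ((c0 (1/2)).prodMk (c0 1)))) (by
    intro a ha
    obtain ⟨o1, o2, o3⟩ := ord a.1 a.2 ha.1 ha.2.1 ha.2.2
    exact ⟨o2, o3, by norm_num, by norm_num⟩)
  have t1 := sm.comp ((c0 0).prodMk (cy.prodMk ((c0 (1/2)).prodMk (c0 1)))) (by
    intro a ha
    obtain ⟨o1, o2, o3⟩ := ord a.1 a.2 ha.1 ha.2.1 ha.2.2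
    exact ⟨o1.trans o2, o3, by norm_num, by norm_num⟩)
  have t2 := sm.comp ((c0 0).prodMk (cx.prodMk ((c0 (1/2)).prodMk (c0 1)))) (by
    intro a ha
    obtain ⟨o1, o2, o3⟩ := ord a.1 a.2 ha.1 ha.2.1 ha.2.2
    exact ⟨o1, o2.trans o3, by norm_num, by norm_num⟩)
  have t3 := sm.comp ((c0 0).prodMk (cx.prodMk (cy.prodMk (c0 1)))) (by
    intro a ha
    obtain ⟨o1, o2, o3⟩ := ord a.1 a.2 ha.1 ha.2.1 ha.2.2
    exact ⟨o1, o2, by show _ < (1:ℝ); simp only; linarith, by norm_num⟩)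
  have t4 := sm.comp ((c0 0).prodMk (cx.prodMk (cy.prodMk (c0 (1/2))))) (by
    intro a ha
    obtain ⟨o1, o2, o3⟩ := ord a.1 a.2 ha.1 ha.2.1 ha.2.2
    exact ⟨o1, o2, o3, by norm_num⟩)
  refine ((((t0.sub t1).add t2).sub t3).add t4).congr ?_
  rintro ⟨x, y⟩ ⟨hx, hxy, hy⟩
  simp only at hx hxy hy
  obtain ⟨o1, o2, o3⟩ := ord x y hx hxy hy
  have hy0 : 0 < y := by linarith
  have n1 : 0 < 1 + x := by linarith
  have n2 : 0 < 1 + y := by linarith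
  have n3 : 0 < 1 - x := by linarith
  have n4 : 0 < 1 - y := by linarith
  have n5 : 0 < y - x := by linarith
  have g0 := G4 hR hM h6 hq o2 o3 (show (1/2:ℝ) < 1 by norm_num) (by norm_num)
  have g1 := G4 hR hM h6 hq (o1.trans o2) o3 (show (1/2:ℝ) < 1 by norm_num) (by norm_num)
  have g2 := G4 hR hM h6 hq o1 (o2.trans o3) (show (1/2:ℝ) < 1 by norm_num) (by norm_num)
  have g3 := G4 hR hM h6 hq o1 o2 (show y / (1 + y) < 1 by linarith) (by norm_num)
  have g4 := G4 hR hM h6 hq o1 o2 o3 (by norm_num)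
  have j0 := (B4_int hR hM hp hq o2 o3 (show (1/2:ℝ) < 1 by norm_num)).1
  have j1 := (B4_int hR hM hp hq (o1.trans o2) o3 (show (1/2:ℝ) < 1 by norm_num)).1
  have j2 := (B4_int hR hM hp hq o1 (o2.trans o3) (show (1/2:ℝ) < 1 by norm_num)).1
  have j3 := (B4_int hR hM hp hq o1 o2 (show y / (1 + y) < 1 by linarith)).1
  have j4 := (B4_int hR hM hp hq o1 o2 o3).1
  have x21 : y / (1 + y) - x / (1 + x) = (y - x) / ((1 + x) * (1 + y)) := by field_simp; ring
  have x31 : 1 / 2 - x / (1 + x) = (1 - x) / (2 * (1 + x)) := by field_simp; ring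
  have x32 : 1 / 2 - y / (1 + y) = (1 - y) / (2 * (1 + y)) := by field_simp; ring
  have x41 : 1 - x / (1 + x) = 1 / (1 + x) := by field_simp; ring
  have x42 : 1 - y / (1 + y) = 1 / (1 + y) := by field_simp; ring
  have x43 : (1:ℝ) - 1 / 2 = 1 / 2 := by norm_num
  simp only [sub_zero, x21, x31, x32, x41, x42, x43] at g0 g1 g2 g3 g4
  rw [show (y - x) / ((1 + x) * (1 + y)) * (1 / 2) / ((1 - x) / (2 * (1 + x)) * (1 / (1 + y))) = (y - x) / (1 - x) by field_simp] at g0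
  rw [show y / (1 + y) * (1 / 2) / (1 / 2 * (1 / (1 + y))) = y by field_simp] at g1
  rw [show x / (1 + x) * (1 / 2) / (1 / 2 * (1 / (1 + x))) = x by field_simp] at g2
  rw [show x / (1 + x) * (1 / (1 + y)) / (y / (1 + y) * (1 / (1 + x))) = x / y by field_simp] at g3
  rw [show x / (1 + x) * ((1 - y) / (2 * (1 + y))) / (y / (1 + y) * ((1 - x) / (2 * (1 + x)))) = x * (1 - y) / (y * (1 - x)) by field_simp] at g4
  have hc : c5 R 0 (x / (1 + x)) (y / (1 + y)) (1 / 2) 1 = R (x, y) := by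
    rw [c5]
    simp only [sub_zero, x41, x42, x43]
    congr 2 <;> field_simp
  set Δ := R (x, y) - dl (LL R q) x y with hΔ
  have key : ∀ᵐ s, p s * Δ = p s * B4 R q (x / (1 + x)) (y / (1 + y)) (1 / 2) 1 s - p s * B4 R q 0 (y / (1 + y)) (1 / 2) 1 s
      + p s * B4 R q 0 (x / (1 + x)) (1 / 2) 1 s - p s * B4 R q 0 (x / (1 + x)) (y / (1 + y)) 1 s
      + p s * B4 R q 0 (x / (1 + x)) (y / (1 + y)) (1 / 2) s := by
    filter_upwards [g0, g1, g2, g3, g4] with s e0 e1 e2 e3 e4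
    by_cases hs : s ∈ Ioo (2:ℝ) 3
    · have six := c5_six h6 o1 o2 o3 (show (1/2:ℝ) < 1 by norm_num) (show (1:ℝ) < s by linarith [hs.1])
      rw [e0 hs, e1 hs, e2 hs, e3 hs, e4 hs, hc] at six
      rw [hΔ, dl]
      linear_combination (-p s) * six
    · rw [hp.zero (by norm_num; simpa using hs)]; ring
  have fin := integral_congr_ae key
  rw [integral_mul_const, hp.it, one_mul, int5 j0 j1 j2 j3 j4] at fin
  exact fin

/-- **Pointwise existence for bounded data.** If `R` is a bounded Lebesgue measurable function
on `P₂` satisfying the 6-term equation everywhere on `P₃` and the symmetry equation everywhere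
on `P₂`, then for every `C ∈ ℝ` there is a bounded Lebesgue measurable `L` on `(0,1)` solving
the perturbed Spence–Abel system with data `(R, C)` pointwise. -/
theorem perturbed_spence_abel_pointwise_existence (R : ℝ × ℝ → ℝ)
    (hRmeas : AEMeasurable R (volume.restrict P2))
    (hRbdd : ∃ M : ℝ, ∀ p ∈ P2, |R p| ≤ M)
    (h6 : ∀ x y z : ℝ, 0 < x → x < y → y < z → z < 1 →
      R (x, y) - R (x, z) + R (y, z)
        - R (x / z, y / z) - R ((z - 1) / (x - 1), (z - 1) / (y - 1))
        + R (x * (z - 1) / (z * (x - 1)), y * (z - 1) / (z * (y - 1))) = 0)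
    (hsym : ∀ x y : ℝ, 0 < x → x < y → y < 1 →
      R (1 - y, (1 - y) / (1 - x)) = R (x, y))
    (C : ℝ) :
    ∃ L : ℝ → ℝ, AEMeasurable L (volume.restrict (Set.Ioo (0:ℝ) 1)) ∧
      (∃ M : ℝ, ∀ x ∈ Set.Ioo (0:ℝ) 1, |L x| ≤ M) ∧
      (∀ x y : ℝ, 0 < x → x < y → y < 1 →
        L x - L y - L (x / y) - L ((y - 1) / (x - 1))
          + L (x * (y - 1) / (y * (x - 1))) = R (x, y)) ∧
      (∀ x ∈ Set.Ioo (0:ℝ) 1, L (1 - x) = C - L x) := by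
  exact assemble R hRbdd (H6_of h6 hsym) hsym (stage1 hRmeas hRbdd (H6_of h6 hsym)) C
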